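/- arXiv:math/0410102 — 3 statements merged into one kernel-verified Lean document; each statement's English description precedes it below -/
import Mathlib

section
/- Let L : (0,∞) → (0,∞) be a nondecreasing function satisfying L(cy) ≤ 3cL(y) for all c ≥ 1 and y > 0, L(y²) ≤ 3L(y) for all y ≥ 1, and ∫₁^∞ dx/(x·L(x)) = 1/2. Define g(x) = (exp(x²/2)/x)·1_{x ≥ 1}. Let h be a nondecreasing function on [0,∞) such that for some x₀ ≥ 1 and c > 0, 0 < h(x) ≤ c·g(x)/L(x) for all x ≥ x₀. Let q be a strictly increasing continuous function on [0,∞) such that for some c̄ ≥ c, L(x) ≤ q(x) ≤ c̄·g(x)/h(x) for all x ≥ x₀. Let A and B be real random variables on a probability space with B > 0 almost surely, satisfying E[exp(λA − λ²B²/2)] ≤ 1 for all λ > 0. Then E[ h(A⁺/B) ] ≤ 4c̄ + h(x₀) + E[ h( q⁻¹( L(B ∨ B⁻¹) ) ) ], where A⁺ = max(A,0) and q⁻¹ is the inverse function of q. In particular, E[h(A⁺/B)] < ∞ whenever E[h(q⁻¹(L(B ∨ B⁻¹)))] < ∞. -/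
open MeasureTheory

/-!
Average the hypothesis `E exp(λA - λ²B²/2) ≤ 1` over `λ` with a density proportional to
`1 / (λ L(λ ∨ λ⁻¹))`. By Fubini the averaged exponential still has expectation at most the total
mass. On the other hand, for `A = yB` with `y ≥ 1` the exponent equals `y²/2 - (λB - y)²/2`, so the
window `λB ∈ (y - 1, y]` alone contributes at least a constant times
`exp(y²/2) / (y (L y ∨ L(B ∨ B⁻¹)))`; the growth conditions on `L` say exactly that the density is
not too small on this window.

For `y = A⁺/B ≥ x₀`, either `q y < L(B ∨ B⁻¹)`, and then `y ≤ q⁻¹(L(B ∨ B⁻¹))`, or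
`q y` dominates both `L y` and `L(B ∨ B⁻¹)`, and then the averaged exponential controls `h y`.
-/

section

open Set Filter Real
open scoped ENNReal

section OrderedField

variable {𝕜 : Type*} [Field 𝕜] [LinearOrder 𝕜] [IsStrictOrderedRing 𝕜] {x b : 𝕜}

lemma one_le_max_self_inv (hb : 0 < b) : 1 ≤ max b b⁻¹ := by
  rcases le_total 1 b with h | h
  · exact le_max_of_le_left h
  · exact le_max_of_le_right ((one_le_inv₀ hb).2 h)

lemma max_div_inv_le_mul (hx : 0 < x) (hb : 0 < b) :
    max (x / b) (x / b)⁻¹ ≤ max x x⁻¹ * max b b⁻¹ := by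
  refine max_le ?_ ?_
  · rw [div_eq_mul_inv]
    gcongr
    · exact le_max_left _ _
    · exact le_max_right _ _
  · rw [inv_div, div_eq_inv_mul]
    gcongr
    · exact le_max_right _ _
    · exact le_max_left _ _

end OrderedField

lemma le_leftInverse_of_le {α β : Type*} [ConditionallyCompleteLinearOrder α]
    [TopologicalSpace α] [OrderTopology α] [DenselyOrdered α] [LinearOrder β]
    [TopologicalSpace β] [OrderClosedTopology β] {q : α → β} {qinv : β → α} {y : α} {v : β}
    (hq : ContinuousOn q (Ici y)) (hqtop : Tendsto q atTop atTop)
    (hqinv : LeftInvOn qinv q (Ici y)) (hv : q y ≤ v) : y ≤ qinv v := by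
  obtain ⟨t, ht, rfl⟩ := isPreconnected_Ici.intermediate_value_Ici self_mem_Ici
    (le_principal_iff.2 (Ici_mem_atTop y)) hq hqtop hv
  rwa [hqinv ht]

lemma tendsto_atTop_of_integrableOn_inv_mul {L : ℝ → ℝ} {a : ℝ} (hpos : ∀ x > a, 0 < L x)
    (hmono : MonotoneOn L (Ioi a)) (hLint : IntegrableOn (fun x ↦ (x * L x)⁻¹) (Ioi a)) :
    Tendsto L atTop atTop := by
  refine tendsto_atTop.2 fun K ↦ ?_
  obtain ⟨z, hz, hKz⟩ : ∃ z > a, K ≤ L z := by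
    by_contra! hbdd
    refine not_integrableOn_Ioi_inv (a := a) ((hLint.const_mul K).mono
      measurable_inv.aestronglyMeasurable ?_)
    filter_upwards [ae_restrict_mem measurableSet_Ioi] with x (hx : a < x)
    have hLx := hpos x hx
    have hinv : x⁻¹ = L x * (x * L x)⁻¹ := by
      rw [mul_inv, mul_left_comm, mul_inv_cancel₀ hLx.ne', mul_one]
    rw [hinv, norm_mul, norm_mul, norm_of_nonneg hLx.le, norm_of_nonneg (hLx.trans (hbdd x hx)).le]
    gcongr
    exact (hbdd x hx).le
  filter_upwards [eventually_ge_atTop z] with x hzx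
  exact hKz.trans (hmono hz (hz.trans_le hzx) hzx)

lemma lintegral_Ioo_zero_one_eq_lintegral_Ioi_inv (f : ℝ → ℝ≥0∞) :
    ∫⁻ l in Ioo 0 1, f l = ∫⁻ x in Ioi 1, ENNReal.ofReal (x ^ 2)⁻¹ * f x⁻¹ := by
  have himage : (fun x : ℝ ↦ x⁻¹) '' Ioi 1 = Ioo 0 1 := by
    rw [image_inv_eq_inv, inv_Ioi₀ one_pos, inv_one]
  rw [← himage, lintegral_image_eq_lintegral_abs_deriv_mul (f' := fun x ↦ -(x ^ 2)⁻¹)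
    measurableSet_Ioi _ inv_injective.injOn]
  · simp only [abs_neg, abs_inv, abs_sq]
  · intro x (hx : 1 < x)
    exact (hasDerivAt_inv (one_pos.trans hx).ne').hasDerivWithinAt

lemma five_sixths_le_integral_exp_neg_sq_div_two :
    5 / 6 ≤ ∫ t in (-1 : ℝ)..0, exp (-t ^ 2 / 2) := by
  have hpoly : ∫ t in (-1 : ℝ)..0, (1 - t ^ 2 / 2) = 5 / 6 := by
    rw [intervalIntegral.integral_sub intervalIntegrable_const
      (Continuous.intervalIntegrable (by fun_prop) _ _)]
    norm_num [intervalIntegral.integral_div, integral_pow]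
  rw [← hpoly]
  refine intervalIntegral.integral_mono_on (by norm_num)
    (Continuous.intervalIntegrable (by fun_prop) _ _)
    (Continuous.intervalIntegrable (by fun_prop) _ _) fun t _ ↦ ?_
  linarith [add_one_le_exp (-t ^ 2 / 2)]

lemma five_sixths_le_mul_integral_exp_window {b : ℝ} (hb : b ≠ 0) (y : ℝ) :
    5 / 6 ≤ b * ∫ l in (y - 1) / b..y / b, exp (-(b * l - y) ^ 2 / 2) := by
  rw [intervalIntegral.mul_integral_comp_mul_sub (f := fun t ↦ exp (-t ^ 2 / 2)),
    mul_div_cancel₀ _ hb, mul_div_cancel₀ _ hb, sub_self, sub_sub_cancel_left]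
  exact five_sixths_le_integral_exp_neg_sq_div_two

lemma exp_mul_sub_sq_eq_mul_exp (l y b : ℝ) :
    exp (l * (y * b) - l ^ 2 * b ^ 2 / 2) =
      exp (y ^ 2 / 2) * exp (-(b * l - y) ^ 2 / 2) := by
  rw [← exp_add]
  ring_nf

/-- The growth conditions imposed on the function `L`, with a constant `C` in place of `3`.
Only the values of `L` on `(0, ∞)` matter. -/
structure ModeratelyGrowing (C : ℝ) (L : ℝ → ℝ) : Prop where
  pos : ∀ x > 0, 0 < L x
  monotoneOn : MonotoneOn L (Ioi 0)
  map_mul_le : ∀ c ≥ 1, ∀ y > 0, L (c * y) ≤ C * c * L y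
  map_sq_le : ∀ y ≥ 1, L (y ^ 2) ≤ C * L y

/-- The unnormalised density `1 / (l L(l ∨ l⁻¹))` on `(0, ∞)`, against which the exponentials
`exp(l a - l² b² / 2)` are averaged. -/
noncomputable def mixingDensity (L : ℝ → ℝ) (l : ℝ) : ℝ := (l * L (max l l⁻¹))⁻¹

/-- The average of the exponentials `exp(l a - l² b² / 2)`, `l > 0`, against
`mixingDensity L`. -/
noncomputable def expMixture (L : ℝ → ℝ) (a b : ℝ) : ℝ≥0∞ :=
  ∫⁻ l in Ioi 0, ENNReal.ofReal (mixingDensity L l) *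
    ENNReal.ofReal (exp (l * a - l ^ 2 * b ^ 2 / 2))

lemma aemeasurable_mixingDensity {L : ℝ → ℝ} (hL : MonotoneOn L (Ioi 0)) :
    AEMeasurable (mixingDensity L) (volume.restrict (Ioi 0)) := by
  have hinv : AntitoneOn (fun l ↦ L l⁻¹) (Ioi 0) := fun x hx y hy hxy ↦
    hL (mem_Ioi.2 (inv_pos.2 hy)) (mem_Ioi.2 (inv_pos.2 hx)) (inv_anti₀ hx hxy)
  have hmax : AEMeasurable (fun l ↦ L (max l l⁻¹)) (volume.restrict (Ioi 0)) := by
    refine ((aemeasurable_restrict_of_monotoneOn measurableSet_Ioi hL).sup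
      (aemeasurable_restrict_of_antitoneOn measurableSet_Ioi hinv)).congr ?_
    filter_upwards [ae_restrict_mem measurableSet_Ioi] with l hl
    exact (hL.map_max hl (mem_Ioi.2 (inv_pos.2 hl))).symm
  exact (aemeasurable_id.mul hmax).inv

lemma lintegral_mixingDensity (L : ℝ → ℝ) :
    ∫⁻ l in Ioi 0, ENNReal.ofReal (mixingDensity L l) =
      2 * ∫⁻ x in Ioi 1, ENNReal.ofReal (x * L x)⁻¹ := by
  have hlarge : ∫⁻ l in Ioi 1, ENNReal.ofReal (mixingDensity L l) =
      ∫⁻ x in Ioi 1, ENNReal.ofReal (x * L x)⁻¹ := by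
    refine setLIntegral_congr_fun measurableSet_Ioi fun x (hx : 1 < x) ↦ ?_
    simp only [mixingDensity, max_eq_left ((inv_le_one_of_one_le₀ hx.le).trans hx.le)]
  have hsmall : ∫⁻ l in Ioo 0 1, ENNReal.ofReal (mixingDensity L l) =
      ∫⁻ x in Ioi 1, ENNReal.ofReal (x * L x)⁻¹ := by
    rw [lintegral_Ioo_zero_one_eq_lintegral_Ioi_inv]
    refine setLIntegral_congr_fun measurableSet_Ioi fun x (hx : 1 < x) ↦ ?_
    have hx0 : x ≠ 0 := (one_pos.trans hx).ne'
    simp only [mixingDensity, inv_inv,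
      max_eq_right ((inv_le_one_of_one_le₀ hx.le).trans hx.le)]
    rw [← ENNReal.ofReal_mul (by positivity), ← mul_inv, ← mul_assoc, sq, mul_assoc x x,
      mul_inv_cancel₀ hx0, mul_one]
  rw [← Ioc_union_Ioi_eq_Ioi zero_le_one, lintegral_union measurableSet_Ioi
    Ioc_disjoint_Ioi_same, ← setLIntegral_congr Ioo_ae_eq_Ioc, hsmall, hlarge, two_mul]

section Fubini

variable {Ω : Type*} {mΩ : MeasurableSpace Ω} {μ : Measure Ω} {L : ℝ → ℝ} {A B : Ω → ℝ}

lemma aemeasurable_expMixture_integrand (hL : MonotoneOn L (Ioi 0)) (hA : AEMeasurable A μ)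
    (hB : AEMeasurable B μ) :
    AEMeasurable (fun p : Ω × ℝ ↦ ENNReal.ofReal (mixingDensity L p.2) *
      ENNReal.ofReal (exp (p.2 * A p.1 - p.2 ^ 2 * B p.1 ^ 2 / 2)))
      (μ.prod (volume.restrict (Ioi 0))) := by
  have hdensity : AEMeasurable (fun p : Ω × ℝ ↦ mixingDensity L p.2)
    (μ.prod (volume.restrict (Ioi 0))) := (aemeasurable_mixingDensity hL).comp_snd
  exact hdensity.ennreal_ofReal.mul (by fun_prop)

lemma aemeasurable_expMixture (hL : MonotoneOn L (Ioi 0)) (hA : AEMeasurable A μ)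
    (hB : AEMeasurable B μ) : AEMeasurable (fun ω ↦ expMixture L (A ω) (B ω)) μ :=
  (aemeasurable_expMixture_integrand hL hA hB).lintegral_prod_right'

lemma lintegral_expMixture_le [SFinite μ] (hL : MonotoneOn L (Ioi 0)) (hA : AEMeasurable A μ)
    (hB : AEMeasurable B μ) (hexp : ∀ l > 0,
      ∫⁻ ω, ENNReal.ofReal (exp (l * A ω - l ^ 2 * B ω ^ 2 / 2)) ∂μ ≤ 1) :
    ∫⁻ ω, expMixture L (A ω) (B ω) ∂μ ≤ 2 * ∫⁻ x in Ioi 1, ENNReal.ofReal (x * L x)⁻¹ := by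
  simp only [expMixture]
  rw [lintegral_lintegral_swap (aemeasurable_expMixture_integrand hL hA hB),
    ← lintegral_mixingDensity]
  refine setLIntegral_mono' measurableSet_Ioi fun l hl ↦ ?_
  rw [lintegral_const_mul' _ _ ENNReal.ofReal_ne_top]
  exact mul_le_of_le_one_right' (hexp l hl)

end Fubini

namespace ModeratelyGrowing

variable {C : ℝ} {L : ℝ → ℝ} {b x y v : ℝ}

lemma constant_pos (hL : ModeratelyGrowing C L) : 0 < C := by
  have hL1 := hL.pos 1 one_pos
  have hsq := hL.map_sq_le 1 le_rfl
  rw [one_pow] at hsq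
  exact pos_of_mul_pos_left (hL1.trans_le hsq) hL1.le

lemma map_mul_le_of_le (hL : ModeratelyGrowing C L) (hx : 1 ≤ x) (hy : 1 ≤ y) (hxv : L x ≤ v)
    (hyv : L y ≤ v) : L (x * y) ≤ C * v := by
  have hmax : L (max x y) ≤ v := by
    rcases max_choice x y with h | h <;> rwa [h]
  calc L (x * y) ≤ L (max x y ^ 2) := by
        refine hL.monotoneOn (mem_Ioi.2 (by positivity)) (mem_Ioi.2 (by positivity)) ?_
        rw [sq]
        gcongr
        · exact le_max_left x y
        · exact le_max_right x y
    _ ≤ C * L (max x y) := hL.map_sq_le _ (le_max_of_le_left hx)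
    _ ≤ C * v := by
        have := hL.constant_pos
        gcongr

lemma mul_map_max_div_le (hL : ModeratelyGrowing C L) (hb : 0 < b) (hx : 0 < x) (hxy : x ≤ y)
    (hy : 1 ≤ y) (hyv : L y ≤ v) (hbv : L (max b b⁻¹) ≤ v) :
    x * L (max (x / b) (x / b)⁻¹) ≤ C * y * v := by
  have hC := hL.constant_pos
  have hb1 := one_le_max_self_inv hb
  have hle : L (max (x / b) (x / b)⁻¹) ≤ L (max x x⁻¹ * max b b⁻¹) :=
    hL.monotoneOn (mem_Ioi.2 (by positivity)) (mem_Ioi.2 (by positivity))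
      (max_div_inv_le_mul hx hb)
  rcases le_total 1 x with h1x | hx1
  · rw [max_eq_left ((inv_le_one_of_one_le₀ h1x).trans h1x)] at hle
    have hxv : L x ≤ v := (hL.monotoneOn hx (hx.trans_le hxy) hxy).trans hyv
    calc x * L (max (x / b) (x / b)⁻¹) ≤ y * (C * v) :=
          mul_le_mul hxy (hle.trans (hL.map_mul_le_of_le h1x hb1 hxv hbv))
            (hL.pos _ (by positivity)).le (by positivity)
      _ = C * y * v := by ring
  · have h1inv : 1 ≤ x⁻¹ := (one_le_inv₀ hx).2 hx1
    rw [max_eq_right (hx1.trans h1inv)] at hle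
    calc x * L (max (x / b) (x / b)⁻¹) ≤ x * (C * x⁻¹ * L (max b b⁻¹)) := by
          gcongr
          exact hle.trans (hL.map_mul_le _ h1inv _ (by positivity))
      _ = C * 1 * L (max b b⁻¹) := by field_simp
      _ ≤ C * y * v := by
          have hLb := hL.pos (max b b⁻¹) (by positivity)
          gcongr

lemma le_mixingDensity (hL : ModeratelyGrowing C L) (hb : 0 < b) (hy : 1 ≤ y)
    (hyv : L y ≤ v) (hbv : L (max b b⁻¹) ≤ v) {l : ℝ} (hl : 0 < l) (hly : b * l ≤ y) :
    b / (C * y * v) ≤ mixingDensity L l := by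
  have hLl : 0 < L (max l l⁻¹) := hL.pos _ (by positivity)
  have hle := hL.mul_map_max_div_le hb (by positivity) hly hy hyv hbv
  rw [mul_div_cancel_left₀ _ hb.ne', mul_assoc] at hle
  rw [mixingDensity, ← one_div, div_le_div_iff₀ ?_ (by positivity), one_mul]
  · exact hle
  · exact lt_of_lt_of_le (by positivity) hle

lemma le_mixingDensity_mul_exp (hL : ModeratelyGrowing C L) (hb : 0 < b) (hy : 1 ≤ y)
    (hyv : L y ≤ v) (hbv : L (max b b⁻¹) ≤ v) {l : ℝ} (hl : 0 < l) (hly : b * l ≤ y) :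
    exp (y ^ 2 / 2) / (C * y * v) * (b * exp (-(b * l - y) ^ 2 / 2)) ≤
      mixingDensity L l * exp (l * (y * b) - l ^ 2 * b ^ 2 / 2) := by
  calc exp (y ^ 2 / 2) / (C * y * v) * (b * exp (-(b * l - y) ^ 2 / 2))
      = b / (C * y * v) * exp (l * (y * b) - l ^ 2 * b ^ 2 / 2) := by
        rw [exp_mul_sub_sq_eq_mul_exp]
        ring
    _ ≤ mixingDensity L l * exp (l * (y * b) - l ^ 2 * b ^ 2 / 2) := by
        gcongr
        exact hL.le_mixingDensity hb hy hyv hbv hl hly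

lemma le_expMixture (hL : ModeratelyGrowing C L) (hb : 0 < b) (hy : 1 ≤ y) (hyv : L y ≤ v)
    (hbv : L (max b b⁻¹) ≤ v) :
    ENNReal.ofReal (5 / 6 * (exp (y ^ 2 / 2) / (C * y * v))) ≤ expMixture L (y * b) b := by
  have hC := hL.constant_pos
  have hv : 0 < v := (hL.pos y (by positivity)).trans_le hyv
  set K := exp (y ^ 2 / 2) / (C * y * v)
  have hwindow : (y - 1) / b ≤ y / b := by gcongr; linarith
  have hsub : Ioc ((y - 1) / b) (y / b) ⊆ Ioi 0 := fun l hl ↦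
    (div_nonneg (by linarith) hb.le).trans_lt hl.1
  calc ENNReal.ofReal (5 / 6 * K)
      ≤ ENNReal.ofReal (∫ l in (y - 1) / b..y / b, K * (b * exp (-(b * l - y) ^ 2 / 2))) := by
        rw [intervalIntegral.integral_const_mul, intervalIntegral.integral_const_mul,
          mul_comm (5 / 6)]
        gcongr
        exact five_sixths_le_mul_integral_exp_window hb.ne' y
    _ = ∫⁻ l in Ioc ((y - 1) / b) (y / b),
          ENNReal.ofReal (K * (b * exp (-(b * l - y) ^ 2 / 2))) := by
        rw [intervalIntegral.integral_of_le hwindow, ofReal_integral_eq_lintegral_ofReal]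
        · exact (Continuous.integrableOn_Icc (by fun_prop)).mono_set Ioc_subset_Icc_self
        · exact ae_of_all _ fun l ↦ by positivity
    _ ≤ ∫⁻ l in Ioc ((y - 1) / b) (y / b), ENNReal.ofReal (mixingDensity L l) *
          ENNReal.ofReal (exp (l * (y * b) - l ^ 2 * b ^ 2 / 2)) := by
        refine setLIntegral_mono' measurableSet_Ioc fun l hl ↦ ?_
        rw [← ENNReal.ofReal_mul' (exp_pos _).le]
        exact ENNReal.ofReal_le_ofReal <|
          hL.le_mixingDensity_mul_exp hb hy hyv hbv (hsub hl) ((le_div_iff₀' hb).1 hl.2)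
    _ ≤ expMixture L (y * b) b := lintegral_mono_set hsub

lemma ofReal_le_mul_expMixture (hL : ModeratelyGrowing C L) (hb : 0 < b) (hy : 1 ≤ y)
    (hyv : L y ≤ v) (hbv : L (max b b⁻¹) ≤ v) {η k : ℝ} (hη : 0 < η)
    (hv : v ≤ k * (exp (y ^ 2 / 2) / y) / η) :
    ENNReal.ofReal η ≤ ENNReal.ofReal (6 / 5 * C * k) * expMixture L (y * b) b := by
  have hC := hL.constant_pos
  have hv0 : 0 < v := (hL.pos y (by positivity)).trans_le hyv
  calc ENNReal.ofReal η
      ≤ ENNReal.ofReal (6 / 5 * C * k * (5 / 6 * (exp (y ^ 2 / 2) / (C * y * v)))) := by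
        gcongr
        calc η ≤ k * (exp (y ^ 2 / 2) / y) / v := (le_div_comm₀ hv0 hη).1 hv
          _ = 6 / 5 * C * k * (5 / 6 * (exp (y ^ 2 / 2) / (C * y * v))) := by field_simp
    _ = ENNReal.ofReal (6 / 5 * C * k) *
          ENNReal.ofReal (5 / 6 * (exp (y ^ 2 / 2) / (C * y * v))) :=
        ENNReal.ofReal_mul' (by positivity)
    _ ≤ ENNReal.ofReal (6 / 5 * C * k) * expMixture L (y * b) b := by
        gcongr
        exact hL.le_expMixture hb hy hyv hbv

lemma ofReal_map_max_div_le (hL : ModeratelyGrowing C L) {h q qinv : ℝ → ℝ} {x₀ k : ℝ}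
    (hx₀ : 1 ≤ x₀) (hhmono : MonotoneOn h (Ici 0)) (hhpos : ∀ x ≥ x₀, 0 < h x)
    (hLq : ∀ x ≥ x₀, L x ≤ q x)
    (hqh : ∀ x ≥ x₀, q x ≤ k * (exp (x ^ 2 / 2) / x) / h x)
    (hqcont : ContinuousOn q (Ici x₀)) (hqtop : Tendsto q atTop atTop)
    (hqinv : LeftInvOn qinv q (Ici x₀)) (a : ℝ) (hb : 0 < b) :
    ENNReal.ofReal (h (max a 0 / b)) ≤
      ENNReal.ofReal (6 / 5 * C * k) * expMixture L a b + ENNReal.ofReal (h x₀) +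
        ENNReal.ofReal (h (qinv (L (max b b⁻¹)))) := by
  set y := max a 0 / b with hy
  have hy0 : 0 ≤ y := by positivity
  rcases le_total y x₀ with hyx₀ | hx₀y
  · exact (ENNReal.ofReal_le_ofReal (hhmono hy0 (hy0.trans hyx₀) hyx₀)).trans
      (le_add_self.trans le_self_add)
  rcases le_total (q y) (L (max b b⁻¹)) with hqL | hLq'
  · have hsub : Ici y ⊆ Ici x₀ := Ici_subset_Ici.2 hx₀y
    have hyq : y ≤ qinv (L (max b b⁻¹)) :=
      le_leftInverse_of_le (hqcont.mono hsub) hqtop (hqinv.mono hsub) hqL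
    exact (ENNReal.ofReal_le_ofReal (hhmono hy0 (hy0.trans hyq) hyq)).trans le_add_self
  · have hy1 : 1 ≤ y := hx₀.trans hx₀y
    have ha : 0 < a := by
      by_contra! ha
      rw [max_eq_right ha, zero_div] at hy
      linarith
    have hyb : y * b = a := by rw [hy, div_mul_cancel₀ _ hb.ne', max_eq_left ha.le]
    have hle := hL.ofReal_le_mul_expMixture hb hy1 (hLq y hx₀y) hLq' (hhpos y hx₀y) (hqh y hx₀y)
    rw [hyb] at hle
    exact hle.trans (le_self_add.trans le_self_add)

end ModeratelyGrowing

-- `12 / 5 = 2 / (5 / 6)`: the mixing density has mass `2 ∫ x in Ioi 1, (x * L x)⁻¹`, and `5 / 6`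
-- bounds `∫ t in -1..0, exp (-t ^ 2 / 2)` from below.
theorem stmt_6_general {Ω : Type*} {mΩ : MeasurableSpace Ω} {μ : Measure Ω} [SFinite μ]
    {C : ℝ} {L : ℝ → ℝ} (hL : ModeratelyGrowing C L)
    (hLint : IntegrableOn (fun x ↦ (x * L x)⁻¹) (Ioi 1))
    {h q qinv : ℝ → ℝ} {x₀ cbar : ℝ} (hx₀ : 1 ≤ x₀) (hhmono : MonotoneOn h (Ici 0))
    (hhpos : ∀ x ≥ x₀, 0 < h x) (hLq : ∀ x ≥ x₀, L x ≤ q x)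
    (hqh : ∀ x ≥ x₀, q x ≤ cbar * (exp (x ^ 2 / 2) / x) / h x)
    (hqcont : ContinuousOn q (Ici x₀)) (hqinv : LeftInvOn qinv q (Ici x₀))
    {A B : Ω → ℝ} (hA : AEMeasurable A μ) (hB : AEMeasurable B μ) (hBpos : ∀ᵐ ω ∂μ, 0 < B ω)
    (hexp : ∀ l > 0, ∫⁻ ω, ENNReal.ofReal (exp (l * A ω - l ^ 2 * B ω ^ 2 / 2)) ∂μ ≤ 1) :
    ∫⁻ ω, ENNReal.ofReal (h (max (A ω) 0 / B ω)) ∂μ ≤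
      ENNReal.ofReal (12 / 5 * C * cbar * ∫ x in Ioi 1, (x * L x)⁻¹) +
        ENNReal.ofReal (h x₀) * μ univ +
        ∫⁻ ω, ENNReal.ofReal (h (qinv (L (max (B ω) (B ω)⁻¹)))) ∂μ := by
  have hLtop : Tendsto L atTop atTop :=
    tendsto_atTop_of_integrableOn_inv_mul (fun x hx ↦ hL.pos x (one_pos.trans hx))
      (hL.monotoneOn.mono (Ioi_subset_Ioi zero_le_one)) hLint
  have hqtop : Tendsto q atTop atTop :=
    tendsto_atTop_mono' _ ((eventually_ge_atTop x₀).mono hLq) hLtop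
  have hinv_nonneg : ∀ᵐ x ∂volume.restrict (Ioi 1), 0 ≤ (x * L x)⁻¹ := by
    filter_upwards [ae_restrict_mem measurableSet_Ioi] with x (hx : 1 < x)
    have := hL.pos x (one_pos.trans hx)
    positivity
  have hmix := aemeasurable_expMixture hL.monotoneOn hA hB
  calc ∫⁻ ω, ENNReal.ofReal (h (max (A ω) 0 / B ω)) ∂μ
      ≤ ∫⁻ ω, (ENNReal.ofReal (6 / 5 * C * cbar) * expMixture L (A ω) (B ω) +
          ENNReal.ofReal (h x₀) + ENNReal.ofReal (h (qinv (L (max (B ω) (B ω)⁻¹))))) ∂μ :=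
        lintegral_mono_ae <| hBpos.mono fun ω hω ↦
          hL.ofReal_map_max_div_le hx₀ hhmono hhpos hLq hqh hqcont hqtop hqinv (A ω) hω
    _ = ENNReal.ofReal (6 / 5 * C * cbar) * ∫⁻ ω, expMixture L (A ω) (B ω) ∂μ +
          ENNReal.ofReal (h x₀) * μ univ +
          ∫⁻ ω, ENNReal.ofReal (h (qinv (L (max (B ω) (B ω)⁻¹)))) ∂μ := by
        rw [lintegral_add_left' (by fun_prop), lintegral_add_left' (by fun_prop),
          lintegral_const_mul'' _ hmix, lintegral_const]
    _ ≤ _ := by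
        gcongr
        refine (mul_le_mul_right (lintegral_expMixture_le hL.monotoneOn hA hB hexp) _).trans_eq ?_
        rw [← ofReal_integral_eq_lintegral_ofReal hLint hinv_nonneg, ← ENNReal.ofReal_ofNat 2,
          ← ENNReal.ofReal_mul zero_le_two,
          ← ENNReal.ofReal_mul' (mul_nonneg zero_le_two (integral_nonneg_of_ae hinv_nonneg))]
        ring_nf

end

/-- Theorem 3.3. -/
theorem stmt_6 {Ω : Type*} {mΩ : MeasurableSpace Ω} {μ : Measure Ω}
    [IsProbabilityMeasure μ]
    (L : ℝ → ℝ)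
    (hLpos : ∀ x > (0 : ℝ), 0 < L x)
    (hLmono : ∀ x y : ℝ, 0 < x → x ≤ y → L x ≤ L y)
    (h31 : ∀ c' ≥ (1 : ℝ), ∀ y > (0 : ℝ), L (c' * y) ≤ 3 * c' * L y)
    (h32 : ∀ y ≥ (1 : ℝ), L (y ^ 2) ≤ 3 * L y)
    (h33 : ∫ x in Set.Ioi (1 : ℝ), (x * L x)⁻¹ = 1 / 2)
    (g : ℝ → ℝ) (hg : ∀ x, g x = if 1 ≤ x then Real.exp (x ^ 2 / 2) / x else 0)
    (h : ℝ → ℝ) (hh0 : ∀ x, 0 ≤ h x)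
    (hhmono : ∀ x y : ℝ, 0 ≤ x → x ≤ y → h x ≤ h y)
    (x₀ c cbar : ℝ) (hx₀ : 1 ≤ x₀) (hc : 0 < c) (hcbar : c ≤ cbar)
    (h39 : ∀ x ≥ x₀, 0 < h x ∧ h x ≤ c * g x / L x)
    (q : ℝ → ℝ) (hqmono : StrictMonoOn q (Set.Ici 0)) (hqcont : ContinuousOn q (Set.Ici 0))
    (h310 : ∀ x ≥ x₀, L x ≤ q x ∧ q x ≤ cbar * g x / h x)
    (qinv : ℝ → ℝ)
    (hqinv : ∀ x ∈ Set.Ici (0 : ℝ), qinv (q x) = x)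
    (hqinv' : ∀ y ∈ q '' Set.Ici (0 : ℝ), q (qinv y) = y)
    (A B : Ω → ℝ) (hA : Measurable A) (hB : Measurable B)
    (hBpos : ∀ᵐ ω ∂μ, 0 < B ω)
    (h14 : ∀ lam : ℝ, 0 < lam →
      ∫⁻ ω, ENNReal.ofReal (Real.exp (lam * A ω - lam ^ 2 * (B ω) ^ 2 / 2)) ∂μ ≤ 1) :
    (∫⁻ ω, ENNReal.ofReal (h (max (A ω) 0 / B ω)) ∂μ ≤
      ENNReal.ofReal (4 * cbar + h x₀) +
        ∫⁻ ω, ENNReal.ofReal (h (qinv (L (max (B ω) (B ω)⁻¹)))) ∂μ) ∧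
    ((∫⁻ ω, ENNReal.ofReal (h (qinv (L (max (B ω) (B ω)⁻¹)))) ∂μ < ⊤) →
      ∫⁻ ω, ENNReal.ofReal (h (max (A ω) 0 / B ω)) ∂μ < ⊤) := by
  have hL : ModeratelyGrowing 3 L :=
    ⟨hLpos, fun x hx y _ hxy ↦ hLmono x y hx hxy, h31, h32⟩
  have hLint : IntegrableOn (fun x ↦ (x * L x)⁻¹) (Set.Ioi 1) :=
    not_imp_comm.1 integral_undef (by rw [h33]; norm_num)
  have hqh : ∀ x ≥ x₀, q x ≤ cbar * (Real.exp (x ^ 2 / 2) / x) / h x := fun x hx ↦ by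
    simpa only [hg, if_pos (hx₀.trans hx)] using (h310 x hx).2
  have hsub : Set.Ici x₀ ⊆ Set.Ici 0 := Set.Ici_subset_Ici.2 (zero_le_one.trans hx₀)
  have hgeneral := stmt_6_general hL hLint hx₀ (fun x hx y _ hxy ↦ hhmono x y hx hxy)
    (fun x hx ↦ (h39 x hx).1) (fun x hx ↦ (h310 x hx).1) hqh (hqcont.mono hsub)
    (fun x hx ↦ hqinv x (hsub hx)) hA.aemeasurable hB.aemeasurable hBpos h14
  have hconst : ENNReal.ofReal (12 / 5 * 3 * cbar * (1 / 2)) ≤ ENNReal.ofReal (4 * cbar) :=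
    ENNReal.ofReal_le_ofReal (by linarith)
  rw [h33, measure_univ, mul_one] at hgeneral
  rw [ENNReal.ofReal_add (by linarith) (hh0 x₀)]
  have hmain := hgeneral.trans (add_le_add_left (add_le_add_left hconst _) _)
  exact ⟨hmain, fun hfin ↦ hmain.trans_lt (by finiteness)⟩
end

section
/- Let 1 < r ≤ 2 and λ₀ > 0. Let (A_n)_{n≥0} and (B_n)_{n≥0} be stochastic processes adapted to a filtration (F_n)_{n≥0} such that A₀ = 0, B_n > 0 and B_n is nondecreasing in n for n ≥ 1, and such that for every 0 < λ < λ₀ the process ( exp( λA_n − (λB_n)^r/r ) )_{n ≥ 0} is a supermartingale with mean ≤ 1. Let L : [1,∞) → (0,∞) be a nondecreasing function satisfying L(cy) ≤ 3cL(y) for all c ≥ 1 and y ≥ 1, L(y²) ≤ 3L(y) for all y ≥ 1, and ∫₁^∞ dx/(x·L(x)) = 1/2. Let η > 0, 0 < ε < λ₀η, and let h : [0,∞) → [0,∞) be a nondecreasing function with h(x) ≤ e^{εx} for all sufficiently large x. Then there exists a constant C depending only on λ₀, η, r, ε, h and L such that E[ h( sup_{n ≥ 0} A_n·(B_n ∨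 η)^{−1}·(1 ∨ log⁺ L(B_n ∨ η))^{−(r−1)/r} ) ] ≤ C. -/
open MeasureTheory

/-!
Let `S` be the supremum of the normalised process and `β = B ∨ η`. On a dyadic window
`β ∈ [η 2ᵏ, η 2ᵏ⁺¹]` the exponential supermartingale with rate `λ ≈ Λₖ ^ (1 / r) / (η 2ᵏ)` controls
`A / β` up to the factor `Λₖ ^ ((r - 1) / r)`, whenever it stays below `exp (y + Λₖ)`; the factor is
absorbed by the normalisation as soon as `Λₖ ≤ 1 ∨ log⁺ L` on the window. Weighting the `k`-th
supermartingale by `exp (-Λₖ)` and applying Ville's maximal inequality to each of them gives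
`P (S > c + y / ρ) ≤ exp (-y) ∑ₖ exp (-Λₖ)` for any `ρ < λ₀ η`. With `Λₖ = 1 ∨ (log L (η 2ᵏ) ∧ k)`
the sum converges by the integral test and Cauchy condensation, and the rates stay below `λ₀`
because `Λₖ ≤ 2ᵏ`. Choosing `ρ > ε`, the exponential tail makes `E (exp (ε S))` finite.
-/

section Tail

open scoped ENNReal

variable {Ω : Type*} {mΩ : MeasurableSpace Ω} {μ : Measure Ω}

theorem integral_stoppedValue_le_integral_zero {ℱ : Filtration ℕ mΩ} [SigmaFiniteFiltration μ ℱ]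
    {M : ℕ → Ω → ℝ} (hM : Supermartingale M ℱ μ) {τ : Ω → ℕ∞} (hτ : IsStoppingTime ℱ τ) {N : ℕ}
    (hτN : ∀ ω, τ ω ≤ N) : ∫ ω, stoppedValue M τ ω ∂μ ≤ ∫ ω, M 0 ω ∂μ := by
  have hneg : ∫ ω, -M 0 ω ∂μ ≤ ∫ ω, -stoppedValue M τ ω ∂μ :=
    hM.neg.expected_stoppedValue_mono (isStoppingTime_const ℱ 0) hτ (fun _ => zero_le) hτN
  rwa [integral_neg, integral_neg, neg_le_neg_iff] at hneg

theorem mul_measure_exists_le_le_of_supermartingale {ℱ : Filtration ℕ mΩ}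
    [SigmaFiniteFiltration μ ℱ] {M : ℕ → Ω → ℝ} (hM : Supermartingale M ℱ μ) (hM0 : 0 ≤ M) (c : ℝ)
    (N : ℕ) : ENNReal.ofReal c * μ {ω | ∃ n ≤ N, c ≤ M n ω} ≤ ENNReal.ofReal (∫ ω, M 0 ω ∂μ) := by
  let τ : Ω → ℕ∞ := fun ω => (hittingBtwn M (Set.Ici c) 0 N ω : ℕ)
  have hτ : IsStoppingTime ℱ τ :=
    hM.stronglyAdapted.adapted.isStoppingTime_hittingBtwn measurableSet_Ici
  have hτN (ω) : τ ω ≤ N := Nat.cast_le.2 (hittingBtwn_le ω)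
  have hint : Integrable (stoppedValue M τ) μ := integrable_stoppedValue ℕ hτ hM.integrable hτN
  have hsub : {ω | ∃ n ≤ N, c ≤ M n ω} ⊆
      {ω | ENNReal.ofReal c ≤ ENNReal.ofReal (stoppedValue M τ ω)} := by
    rintro ω ⟨n, hnN, hn⟩
    exact ENNReal.ofReal_le_ofReal
      (stoppedValue_hittingBtwn_mem (s := Set.Ici c) ⟨n, ⟨n.zero_le, hnN⟩, hn⟩)
  calc ENNReal.ofReal c * μ {ω | ∃ n ≤ N, c ≤ M n ω}
      ≤ ∫⁻ ω, ENNReal.ofReal (stoppedValue M τ ω) ∂μ :=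
        (mul_le_mul_right (measure_mono hsub) _).trans
          (mul_meas_ge_le_lintegral₀ hint.aemeasurable.ennreal_ofReal _)
    _ = ENNReal.ofReal (∫ ω, stoppedValue M τ ω ∂μ) :=
        (ofReal_integral_eq_lintegral_ofReal hint (ae_of_all _ fun ω => hM0 _ ω)).symm
    _ ≤ ENNReal.ofReal (∫ ω, M 0 ω ∂μ) :=
        ENNReal.ofReal_le_ofReal (integral_stoppedValue_le_integral_zero hM hτ hτN)

theorem mul_measure_exists_le_of_supermartingale {ℱ : Filtration ℕ mΩ} [SigmaFiniteFiltration μ ℱ]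
    {M : ℕ → Ω → ℝ} (hM : Supermartingale M ℱ μ) (hM0 : 0 ≤ M) (c : ℝ) :
    ENNReal.ofReal c * μ {ω | ∃ n, c ≤ M n ω} ≤ ENNReal.ofReal (∫ ω, M 0 ω ∂μ) := by
  have hmono : Monotone fun N => {ω | ∃ n ≤ N, c ≤ M n ω} :=
    fun _ _ hNN' _ ⟨n, hn, hc⟩ => ⟨n, hn.trans hNN', hc⟩
  have hunion : {ω | ∃ n, c ≤ M n ω} = ⋃ N, {ω | ∃ n ≤ N, c ≤ M n ω} := by
    ext ω
    simp only [Set.mem_ofPred_eq, Set.mem_iUnion]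
    exact ⟨fun ⟨n, hc⟩ => ⟨n, n, le_rfl, hc⟩, fun ⟨_, n, _, hc⟩ => ⟨n, hc⟩⟩
  rw [hunion, hmono.measure_iUnion, ENNReal.mul_iSup]
  exact iSup_le fun N => mul_measure_exists_le_le_of_supermartingale hM hM0 c N

theorem mul_measure_exists_exists_le_of_supermartingale {ι : Type*} [Countable ι]
    {ℱ : Filtration ℕ mΩ} [SigmaFiniteFiltration μ ℱ] {M : ι → ℕ → Ω → ℝ}
    (hM : ∀ i, Supermartingale (M i) ℱ μ) (hM0 : ∀ i, 0 ≤ M i) (c : ℝ) :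
    ENNReal.ofReal c * μ {ω | ∃ i n, c ≤ M i n ω} ≤
      ∑' i, ENNReal.ofReal (∫ ω, M i 0 ω ∂μ) := by
  have hunion : {ω | ∃ i n, c ≤ M i n ω} = ⋃ i, {ω | ∃ n, c ≤ M i n ω} := by
    ext ω
    simp only [Set.mem_ofPred_eq, Set.mem_iUnion]
  calc ENNReal.ofReal c * μ {ω | ∃ i n, c ≤ M i n ω}
      ≤ ENNReal.ofReal c * ∑' i, μ {ω | ∃ n, c ≤ M i n ω} := by
        rw [hunion]
        exact mul_le_mul_right (measure_iUnion_le _) _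
    _ = ∑' i, ENNReal.ofReal c * μ {ω | ∃ n, c ≤ M i n ω} := ENNReal.tsum_mul_left.symm
    _ ≤ ∑' i, ENNReal.ofReal (∫ ω, M i 0 ω ∂μ) :=
        ENNReal.tsum_le_tsum fun i => mul_measure_exists_le_of_supermartingale (hM i) (hM0 i) c

theorem lintegral_comp_le_add_tsum_measure_lt {X : Ω → ℝ} {g : ℝ → ℝ≥0∞} (hg : Monotone g) :
    ∫⁻ ω, g (X ω) ∂μ ≤ g 0 * μ Set.univ + ∑' m : ℕ, g (m + 1) * μ {ω | m < X ω} := by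
  -- `X` need not be measurable, so its upper level sets are replaced by measurable hulls.
  let E : ℕ → Set Ω := fun m => toMeasurable μ {ω | m < X ω}
  have hE (m) : MeasurableSet (E m) := measurableSet_toMeasurable μ _
  have hpointwise (ω) : g (X ω) ≤ g 0 + ∑' m : ℕ, (E m).indicator (fun _ => g (m + 1)) ω := by
    rcases le_or_gt (X ω) 0 with hX | hX
    · exact (hg hX).trans le_self_add
    · obtain ⟨m, hm⟩ := Nat.exists_eq_succ_of_ne_zero (Nat.ceil_pos.2 hX).ne'
      have hmX : (m : ℝ) < X ω := Nat.lt_ceil.1 (hm ▸ m.lt_succ_self)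
      have hXm : X ω ≤ m + 1 := by exact_mod_cast hm ▸ Nat.le_ceil (X ω)
      have hmem : ω ∈ E m := subset_toMeasurable μ _ hmX
      calc g (X ω) ≤ (E m).indicator (fun _ => g (m + 1)) ω := by
            rw [Set.indicator_of_mem hmem]
            exact hg hXm
        _ ≤ ∑' m : ℕ, (E m).indicator (fun _ => g (m + 1)) ω :=
            ENNReal.le_tsum (f := fun m : ℕ => (E m).indicator (fun _ => g (m + 1)) ω) m
        _ ≤ _ := le_add_self
  calc ∫⁻ ω, g (X ω) ∂μ
      ≤ ∫⁻ ω, g 0 + ∑' m : ℕ, (E m).indicator (fun _ => g (m + 1)) ω ∂μ :=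
        lintegral_mono hpointwise
    _ = g 0 * μ Set.univ + ∑' m : ℕ, g (m + 1) * μ {ω | m < X ω} := by
        rw [lintegral_add_left measurable_const, lintegral_const,
          lintegral_tsum fun m => (measurable_const.indicator (hE m)).aemeasurable]
        simp only [lintegral_indicator_const (hE _), E, measure_toMeasurable]

theorem lintegral_exp_mul_le_of_measure_lt_le {X : Ω → ℝ} {θ : ℝ} (hθ0 : 0 ≤ θ) (hθ1 : θ < 1)
    {W : ℝ≥0∞} (htail : ∀ m : ℕ, μ {ω | m < X ω} ≤ ENNReal.ofReal (Real.exp (-m)) * W) :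
    ∫⁻ ω, ENNReal.ofReal (Real.exp (θ * X ω)) ∂μ ≤
      μ Set.univ + ENNReal.ofReal (Real.exp θ * (1 - Real.exp (θ - 1))⁻¹) * W := by
  have hmono : Monotone fun x => ENNReal.ofReal (Real.exp (θ * x)) := fun x y hxy => by
    dsimp only
    gcongr
  have hratio : Real.exp (θ - 1) < 1 := Real.exp_lt_one_iff.2 (by linarith)
  have hgeom : HasSum (fun m : ℕ => Real.exp (θ * (m + 1)) * Real.exp (-m))
      (Real.exp θ * (1 - Real.exp (θ - 1))⁻¹) := by
    refine ((hasSum_geometric_of_lt_one (Real.exp_pos _).le hratio).mul_left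
      (Real.exp θ)).congr_fun fun m => ?_
    rw [← Real.exp_nat_mul, ← Real.exp_add, ← Real.exp_add]
    ring_nf
  calc ∫⁻ ω, ENNReal.ofReal (Real.exp (θ * X ω)) ∂μ
      ≤ ENNReal.ofReal (Real.exp (θ * 0)) * μ Set.univ
          + ∑' m : ℕ, ENNReal.ofReal (Real.exp (θ * (m + 1))) * μ {ω | m < X ω} :=
        lintegral_comp_le_add_tsum_measure_lt hmono
    _ ≤ μ Set.univ
          + ∑' m : ℕ, ENNReal.ofReal (Real.exp (θ * (m + 1)) * Real.exp (-m)) * W := by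
        rw [mul_zero, Real.exp_zero, ENNReal.ofReal_one, one_mul]
        refine add_le_add_right (ENNReal.tsum_le_tsum fun m => ?_) _
        rw [ENNReal.ofReal_mul (Real.exp_pos _).le, mul_assoc]
        exact mul_le_mul_right (htail m) _
    _ = _ := by
        rw [ENNReal.tsum_mul_right, ← ENNReal.ofReal_tsum_of_nonneg (fun m => by positivity)
          hgeom.summable, hgeom.tsum_eq]

end Tail

theorem summable_two_pow_mul_of_integrableOn_Ioi {f : ℝ → ℝ} {a c : ℝ} (hc : 0 < c)
    (hanti : AntitoneOn f (Set.Ici a)) (hnonneg : ∀ x ∈ Set.Ici a, 0 ≤ f x)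
    (hint : IntegrableOn f (Set.Ioi a)) : Summable fun k : ℕ => (2 : ℝ) ^ k * f (c * 2 ^ k) := by
  obtain ⟨N, hN⟩ := exists_nat_ge (a / c)
  have hge {x : ℝ} (hx : (N : ℝ) ≤ x) : a ≤ c * x := by
    rw [div_le_iff₀' hc] at hN
    exact hN.trans (by gcongr)
  have hanti' : AntitoneOn (fun x => f (c * x)) (Set.Ici (N : ℝ)) := fun x hx y hy hxy =>
    hanti (hge hx) (hge hy) (by gcongr)
  have hsummable : Summable fun n : ℕ => f (c * n) :=
    hanti'.summable_of_integrableOn_Ioi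
      ((integrableOn_Ioi_comp_mul_left_iff f N hc).2
        (hint.mono_set (Set.Ioi_subset_Ioi (hge le_rfl))))
      fun x hx => hnonneg _ (hge (le_of_lt hx))
  have hcondensed := (summable_condensed_iff_of_eventually_nonneg (f := fun n : ℕ => f (c * n))
    ?_ ?_).2 hsummable
  · simpa only [Nat.cast_pow, Nat.cast_ofNat] using hcondensed
  · filter_upwards [Filter.eventually_ge_atTop N] with n hn
    exact hnonneg _ (hge (by exact_mod_cast hn))
  · filter_upwards [Filter.eventually_ge_atTop N] with n hn
    have hNn : (N : ℝ) ≤ n := by exact_mod_cast hn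
    exact hanti' hNn (hNn.trans (by simp)) (by simp)

theorem summable_inv_mul_two_pow {L : ℝ → ℝ} {η : ℝ} (hη : 0 < η)
    (hLpos : ∀ x, 1 ≤ x → 0 < L x) (hLmono : MonotoneOn L (Set.Ici 1))
    (hLint : IntegrableOn (fun x => (x * L x)⁻¹) (Set.Ioi 1)) :
    Summable fun k : ℕ => (L (η * 2 ^ k))⁻¹ := by
  have hpos (x : ℝ) (hx : 1 ≤ x) : 0 < x * L x := mul_pos (by linarith) (hLpos x hx)
  have hanti : AntitoneOn (fun x => (x * L x)⁻¹) (Set.Ici 1) := fun x hx y hy hxy =>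
    inv_anti₀ (hpos x hx) (mul_le_mul hxy (hLmono hx hy hxy) (hLpos x hx).le
      (zero_le_one.trans hy))
  refine ((summable_two_pow_mul_of_integrableOn_Ioi hη hanti
    (fun x hx => (inv_pos.2 (hpos x hx)).le) hLint).mul_left η).congr fun k => ?_
  rw [mul_inv, ← mul_assoc, ← mul_assoc, mul_inv_cancel₀ (by positivity), one_mul]

/-- The logarithmic factor `1 ∨ log⁺ (L x)` of the normalisation. -/
noncomputable def logFactor (L : ℝ → ℝ) (x : ℝ) : ℝ := max 1 (max (Real.log (L x)) 0)

/-- The self-normalised statistic of the values `a` of `A` and `b` of `B`. -/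
noncomputable def selfNormalized (r η : ℝ) (L : ℝ → ℝ) (a b : ℝ) : ℝ :=
  a * (max b η)⁻¹ * logFactor L (max b η) ^ (-((r - 1) / r))

/-- The exponential of `l * a`, compensated by `(l * b) ^ r / r`; along `(A, B)` it is the
canonical supermartingale. -/
noncomputable def compensatedExp (r l a b : ℝ) : ℝ := Real.exp (l * a - (l * b) ^ r / r)

/-- The cost `Λₖ` of the scale `η * 2 ^ k`: the `k`-th supermartingale gets the weight `exp (-Λₖ)`.
The cap at `k` keeps `Λₖ ≤ 2 ^ k` whatever the growth of `L`, and scales below `1`, where nothing is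
known about `L`, get the least possible cost. -/
noncomputable def scaleCost (L : ℝ → ℝ) (η : ℝ) (k : ℕ) : ℝ :=
  if 1 ≤ η * 2 ^ k then max 1 (min (Real.log (L (η * 2 ^ k))) k) else 1

/-- The rate of the exponential supermartingale used on the window
`[η * 2 ^ k, η * 2 ^ (k + 1)]`. -/
noncomputable def scaleRate (r ρ η : ℝ) (L : ℝ → ℝ) (k : ℕ) : ℝ :=
  ρ * scaleCost L η k ^ (1 / r) / (η * 2 ^ k)

section Scales

variable {r ρ η : ℝ} {L : ℝ → ℝ}

theorem one_le_logFactor (L : ℝ → ℝ) (x : ℝ) : 1 ≤ logFactor L x := le_max_left _ _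

theorem one_le_scaleCost (L : ℝ → ℝ) (η : ℝ) (k : ℕ) : 1 ≤ scaleCost L η k := by
  unfold scaleCost
  split_ifs
  exacts [le_max_left _ _, le_rfl]

theorem scaleCost_le_two_pow (L : ℝ → ℝ) (η : ℝ) (k : ℕ) : scaleCost L η k ≤ 2 ^ k := by
  have hone : (1 : ℝ) ≤ 2 ^ k := one_le_pow₀ one_le_two
  unfold scaleCost
  split_ifs
  · exact max_le hone ((min_le_right _ _).trans (by exact_mod_cast k.lt_two_pow_self.le))
  · exact hone

theorem scaleCost_le_logFactor (hLpos : ∀ x, 1 ≤ x → 0 < L x) (hLmono : MonotoneOn L (Set.Ici 1))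
    {k : ℕ} {β : ℝ} (hβ : η * 2 ^ k ≤ β) : scaleCost L η k ≤ logFactor L β := by
  unfold scaleCost
  split_ifs with hscale
  · refine max_le (one_le_logFactor L β) ?_
    calc min (Real.log (L (η * 2 ^ k))) k ≤ Real.log (L (η * 2 ^ k)) := min_le_left _ _
      _ ≤ Real.log (L β) :=
          Real.log_le_log (hLpos _ hscale) (hLmono hscale (hscale.trans hβ) hβ)
      _ ≤ logFactor L β := (le_max_left _ _).trans (le_max_right _ _)
  · exact one_le_logFactor L β

theorem summable_exp_neg_scaleCost (hη : 0 < η) (hLpos : ∀ x, 1 ≤ x → 0 < L x)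
    (hLmono : MonotoneOn L (Set.Ici 1))
    (hLint : IntegrableOn (fun x => (x * L x)⁻¹) (Set.Ioi 1)) :
    Summable fun k => Real.exp (-scaleCost L η k) := by
  have hmajorant : Summable fun k : ℕ => (L (η * 2 ^ k))⁻¹ + Real.exp (-k) :=
    (summable_inv_mul_two_pow hη hLpos hLmono hLint).add Real.summable_exp_neg_nat
  refine hmajorant.of_norm_bounded_eventually_nat ?_
  have hlarge : ∀ᶠ k : ℕ in Filter.atTop, 1 ≤ η * 2 ^ k :=
    ((tendsto_pow_atTop_atTop_of_one_lt one_lt_two).const_mul_atTop hη).eventually_ge_atTop 1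
  filter_upwards [hlarge] with k hk
  have hL := hLpos _ hk
  rw [Real.norm_of_nonneg (Real.exp_pos _).le]
  have hmin : min (Real.log (L (η * 2 ^ k))) k ≤ scaleCost L η k := by
    rw [scaleCost, if_pos hk]
    exact le_max_right _ _
  rcases min_le_iff.1 hmin with hlog | hcap
  · calc Real.exp (-scaleCost L η k) ≤ Real.exp (-Real.log (L (η * 2 ^ k))) := by gcongr
      _ = (L (η * 2 ^ k))⁻¹ := by rw [Real.exp_neg, Real.exp_log hL]
      _ ≤ _ := le_add_of_nonneg_right (Real.exp_pos _).le
  · calc Real.exp (-scaleCost L η k) ≤ Real.exp (-k) := by gcongr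
      _ ≤ _ := le_add_of_nonneg_left (inv_pos.2 hL).le

theorem scaleRate_pos (hρ : 0 < ρ) (hη : 0 < η) (k : ℕ) : 0 < scaleRate r ρ η L k := by
  have := one_le_scaleCost L η k
  unfold scaleRate
  positivity

theorem scaleRate_le (hr : 1 ≤ r) (hρ : 0 < ρ) (hη : 0 < η) (k : ℕ) :
    scaleRate r ρ η L k ≤ ρ / η := by
  have hpow : scaleCost L η k ^ (1 / r) ≤ 2 ^ k :=
    (Real.rpow_le_self_of_one_le (one_le_scaleCost L η k)
      ((div_le_one (by linarith)).2 hr)).trans (scaleCost_le_two_pow L η k)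
  calc scaleRate r ρ η L k ≤ ρ * 2 ^ k / (η * 2 ^ k) := by
        unfold scaleRate
        gcongr
    _ = ρ / η := mul_div_mul_right _ _ (by positivity)

theorem exists_mul_two_pow_le_and_le {β : ℝ} (hη : 0 < η) (hβ : η ≤ β) :
    ∃ k : ℕ, η * 2 ^ k ≤ β ∧ β ≤ 2 * (η * 2 ^ k) := by
  obtain ⟨k, hk, hk'⟩ := exists_nat_pow_near ((one_le_div hη).2 hβ) (one_lt_two (α := ℝ))
  rw [le_div_iff₀' hη] at hk
  rw [div_lt_iff₀' hη, pow_succ] at hk'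
  exact ⟨k, hk, by linarith⟩

theorem div_le_of_compensatedExp_le {l a b β q : ℝ} (hr : 1 ≤ r) (hl : 0 < l) (hb : 0 < b)
    (hbβ : b ≤ β) (h : compensatedExp r l a b ≤ Real.exp q) :
    a / β ≤ (l * β) ^ (r - 1) + q / (l * β) := by
  have hlβ : 0 < l * β := mul_pos hl (hb.trans_le hbβ)
  have hexponent : l * a - (l * b) ^ r / r ≤ q := Real.exp_le_exp.1 h
  have hcompensator : (l * b) ^ r / r ≤ (l * β) ^ r :=
    (div_le_self (by positivity) hr).trans (by gcongr)
  calc a / β = l * a / (l * β) := (mul_div_mul_left a β hl.ne').symm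
    _ ≤ ((l * β) ^ r + q) / (l * β) := by
        gcongr
        linarith
    _ = (l * β) ^ (r - 1) + q / (l * β) := by rw [add_div, Real.rpow_sub_one hlβ.ne']

theorem div_le_of_exp_neg_mul_compensatedExp_le {s P a b β y : ℝ} (hr : 1 ≤ r) (hρ : 0 < ρ)
    (hs : 1 ≤ s) (hP : 0 < P) (hPβ : P ≤ β) (hβP : β ≤ 2 * P) (hb : 0 < b) (hbβ : b ≤ β)
    (hy : 0 ≤ y) (h : Real.exp (-s ^ r) * compensatedExp r (ρ * s / P) a b ≤ Real.exp y) :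
    a / β ≤ ((2 * ρ) ^ (r - 1) + (1 + y) / ρ) * s ^ (r - 1) := by
  have hexp : compensatedExp r (ρ * s / P) a b ≤ Real.exp (y + s ^ r) := by
    rwa [Real.exp_neg, inv_mul_le_iff₀' (Real.exp_pos _), ← Real.exp_add] at h
  have hlower : ρ * s ≤ ρ * s / P * β := by
    rw [div_mul_eq_mul_div, le_div_iff₀ hP]
    gcongr
  have hupper : ρ * s / P * β ≤ 2 * ρ * s := by
    rw [div_mul_eq_mul_div, div_le_iff₀ hP]
    calc ρ * s * β ≤ ρ * s * (2 * P) := by gcongr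
      _ = 2 * ρ * s * P := by ring
  have hsr : s ^ (r - 1) * s = s ^ r := by
    rw [Real.rpow_sub_one (by positivity), div_mul_cancel₀ _ (by positivity)]
  have hone : 1 ≤ s ^ r := Real.one_le_rpow hs (by linarith)
  calc a / β ≤ (ρ * s / P * β) ^ (r - 1) + (y + s ^ r) / (ρ * s / P * β) :=
        div_le_of_compensatedExp_le hr (by positivity) hb hbβ hexp
    _ ≤ (2 * ρ * s) ^ (r - 1) + (y + s ^ r) / (ρ * s) := by gcongr; linarith
    _ ≤ (2 * ρ * s) ^ (r - 1) + (1 + y) * s ^ r / (ρ * s) := by gcongr; nlinarith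
    _ = ((2 * ρ) ^ (r - 1) + (1 + y) / ρ) * s ^ (r - 1) := by
        rw [Real.mul_rpow (by positivity) (by positivity), ← hsr]
        field_simp

theorem exists_exp_le_of_lt_selfNormalized (hr : 1 ≤ r) (hρ : 0 < ρ) (hη : 0 < η)
    (hLpos : ∀ x, 1 ≤ x → 0 < L x) (hLmono : MonotoneOn L (Set.Ici 1)) {a b y : ℝ} (hb : 0 < b)
    (hy : 0 ≤ y) (h : (2 * ρ) ^ (r - 1) + (1 + y) / ρ < selfNormalized r η L a b) :
    ∃ k, Real.exp y ≤
      Real.exp (-scaleCost L η k) * compensatedExp r (scaleRate r ρ η L k) a b := by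
  set β := max b η
  obtain ⟨k, hk, hk'⟩ := exists_mul_two_pow_le_and_le hη (le_max_right b η)
  refine ⟨k, le_of_not_gt fun hlt => h.not_ge ?_⟩
  set Λ := scaleCost L η k
  have hΛ1 : 1 ≤ Λ := one_le_scaleCost L η k
  have hroot : (Λ ^ (1 / r)) ^ r = Λ := by
    rw [one_div, Real.rpow_inv_rpow (by linarith) (by linarith)]
  have hroot' : (Λ ^ (1 / r)) ^ (r - 1) = Λ ^ ((r - 1) / r) := by
    rw [← Real.rpow_mul (by linarith), one_div_mul_eq_div]
  have hwindow : a / β ≤ ((2 * ρ) ^ (r - 1) + (1 + y) / ρ) * Λ ^ ((r - 1) / r) := by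
    rw [← hroot']
    refine div_le_of_exp_neg_mul_compensatedExp_le (P := η * 2 ^ k) hr hρ
      (Real.one_le_rpow hΛ1 (by positivity)) (by positivity) hk hk' hb (le_max_left b η) hy ?_
    rw [hroot]
    exact hlt.le
  have hfactor : Λ ^ ((r - 1) / r) ≤ logFactor L β ^ ((r - 1) / r) :=
    Real.rpow_le_rpow (by linarith) (scaleCost_le_logFactor hLpos hLmono hk)
      (div_nonneg (by linarith) (by linarith))
  have hlogFactor : 0 < logFactor L β := zero_lt_one.trans_le (one_le_logFactor L β)
  calc selfNormalized r η L a b = a / β / logFactor L β ^ ((r - 1) / r) := by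
        rw [selfNormalized, Real.rpow_neg hlogFactor.le, ← div_eq_mul_inv, ← div_eq_mul_inv]
    _ ≤ (2 * ρ) ^ (r - 1) + (1 + y) / ρ := by
        rw [div_le_iff₀ (by positivity)]
        exact hwindow.trans (by gcongr)

end Scales

theorem exists_le_mul_exp_of_eventually_le_exp {h : ℝ → ℝ} {ε : ℝ}
    (hmono : MonotoneOn h (Set.Ici 0)) (hexp : ∀ᶠ x in Filter.atTop, h x ≤ Real.exp (ε * x)) :
    ∃ D, 0 ≤ D ∧ ∀ x, 0 ≤ x → h x ≤ D * Real.exp (ε * x) := by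
  obtain ⟨x₀, hx₀⟩ := Filter.eventually_atTop.1 hexp
  set x₁ := max x₀ 0
  have hx₁ : 0 ≤ x₁ := le_max_right _ _
  refine ⟨Real.exp (ε * x₁), (Real.exp_pos _).le, fun x hx => ?_⟩
  calc h x ≤ h (x₁ + x) := hmono hx (add_nonneg hx₁ hx) (by linarith)
    _ ≤ Real.exp (ε * (x₁ + x)) := hx₀ _ (by linarith [le_max_left x₀ 0])
    _ = Real.exp (ε * x₁) * Real.exp (ε * x) := by rw [mul_add, Real.exp_add]

/-- An explicit bound for `E (exp (ε S))`, where `S` is the supremum of the self-normalised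
process. -/
noncomputable def expMomentBound (r ρ η ε : ℝ) (L : ℝ → ℝ) : ENNReal :=
  ENNReal.ofReal (Real.exp (ε * ((2 * ρ) ^ (r - 1) + 1 / ρ))) *
    (1 + ENNReal.ofReal (Real.exp (ε / ρ) * (1 - Real.exp (ε / ρ - 1))⁻¹) *
      ∑' k, ENNReal.ofReal (Real.exp (-scaleCost L η k)))

theorem expMomentBound_ne_top {η : ℝ} {L : ℝ → ℝ} (hη : 0 < η) (hLpos : ∀ x, 1 ≤ x → 0 < L x)
    (hLmono : MonotoneOn L (Set.Ici 1))
    (hLint : IntegrableOn (fun x => (x * L x)⁻¹) (Set.Ioi 1)) (r ρ ε : ℝ) :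
    expMomentBound r ρ η ε L ≠ ⊤ :=
  ENNReal.mul_ne_top ENNReal.ofReal_ne_top (ENNReal.add_ne_top.2 ⟨ENNReal.one_ne_top,
    ENNReal.mul_ne_top ENNReal.ofReal_ne_top
      (summable_exp_neg_scaleCost hη hLpos hLmono hLint).tsum_ofReal_ne_top⟩)

section MomentBound

variable {Ω : Type*} {mΩ : MeasurableSpace Ω} {μ : Measure Ω} {ℱ : Filtration ℕ mΩ}
  {A B : ℕ → Ω → ℝ} {r ρ lam₀ η : ℝ} {L : ℝ → ℝ}

theorem measure_exists_lt_selfNormalized_le [SigmaFiniteFiltration μ ℱ] (hr : 1 ≤ r) (hρ : 0 < ρ)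
    (hη : 0 < η) (hρη : ρ < lam₀ * η) (hLpos : ∀ x, 1 ≤ x → 0 < L x)
    (hLmono : MonotoneOn L (Set.Ici 1)) (hA0 : ∀ ω, A 0 ω = 0) (hB : ∀ n, 1 ≤ n → ∀ ω, 0 < B n ω)
    (hM : ∀ lam, 0 < lam → lam < lam₀ →
      Supermartingale (fun n ω => compensatedExp r lam (A n ω) (B n ω)) ℱ μ ∧
        ∫ ω, compensatedExp r lam (A 0 ω) (B 0 ω) ∂μ ≤ 1)
    {y : ℝ} (hy : 0 ≤ y) :
    μ {ω | ∃ n, (2 * ρ) ^ (r - 1) + (1 + y) / ρ < selfNormalized r η L (A n ω) (B n ω)} ≤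
      ENNReal.ofReal (Real.exp (-y)) * ∑' k, ENNReal.ofReal (Real.exp (-scaleCost L η k)) := by
  let M (k : ℕ) : ℕ → Ω → ℝ := Real.exp (-scaleCost L η k) •
    fun n ω => compensatedExp r (scaleRate r ρ η L k) (A n ω) (B n ω)
  have hM' (k) := hM (scaleRate r ρ η L k) (scaleRate_pos hρ hη k)
    ((scaleRate_le hr hρ hη k).trans_lt ((div_lt_iff₀ hη).2 hρη))
  have hmean (k) : ∫ ω, M k 0 ω ∂μ ≤ Real.exp (-scaleCost L η k) := by
    simp only [M, Pi.smul_apply, smul_eq_mul, integral_const_mul]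
    exact mul_le_of_le_one_right (Real.exp_pos _).le (hM' k).2
  have hsub : {ω | ∃ n, (2 * ρ) ^ (r - 1) + (1 + y) / ρ < selfNormalized r η L (A n ω) (B n ω)} ⊆
      {ω | ∃ k n, Real.exp y ≤ M k n ω} := by
    rintro ω ⟨n, hn⟩
    rcases Nat.eq_zero_or_pos n with rfl | hn0
    · rw [hA0, selfNormalized, zero_mul, zero_mul] at hn
      exact absurd hn (not_lt.2 (by positivity))
    · obtain ⟨k, hk⟩ :=
        exists_exp_le_of_lt_selfNormalized hr hρ hη hLpos hLmono (hB n hn0 ω) hy hn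
      exact ⟨k, n, hk⟩
  have hville := mul_measure_exists_exists_le_of_supermartingale (M := M)
    (fun k => (hM' k).1.smul_nonneg (Real.exp_pos _).le)
    (fun k n ω => mul_nonneg (Real.exp_pos _).le (Real.exp_pos _).le) (Real.exp y)
  rw [Real.exp_neg, ENNReal.ofReal_inv_of_pos (Real.exp_pos y), ← ENNReal.div_eq_inv_mul,
    ENNReal.le_div_iff_mul_le (by simp [Real.exp_pos]) (by simp), mul_comm]
  calc ENNReal.ofReal (Real.exp y) * μ _
      ≤ ENNReal.ofReal (Real.exp y) * μ {ω | ∃ k n, Real.exp y ≤ M k n ω} :=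
        mul_le_mul_right (measure_mono hsub) _
    _ ≤ ∑' k, ENNReal.ofReal (∫ ω, M k 0 ω ∂μ) := hville
    _ ≤ _ := ENNReal.tsum_le_tsum fun k => ENNReal.ofReal_le_ofReal (hmean k)

theorem lintegral_exp_iSup_selfNormalized_le [IsProbabilityMeasure μ] {ε : ℝ} (hr : 1 ≤ r)
    (hε : 0 ≤ ε) (hερ : ε < ρ) (hη : 0 < η) (hρη : ρ < lam₀ * η)
    (hLpos : ∀ x, 1 ≤ x → 0 < L x) (hLmono : MonotoneOn L (Set.Ici 1))
    (hA0 : ∀ ω, A 0 ω = 0) (hB : ∀ n, 1 ≤ n → ∀ ω, 0 < B n ω)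
    (hM : ∀ lam, 0 < lam → lam < lam₀ →
      Supermartingale (fun n ω => compensatedExp r lam (A n ω) (B n ω)) ℱ μ ∧
        ∫ ω, compensatedExp r lam (A 0 ω) (B 0 ω) ∂μ ≤ 1) :
    ∫⁻ ω, ENNReal.ofReal (Real.exp (ε * ⨆ n, selfNormalized r η L (A n ω) (B n ω))) ∂μ ≤
      expMomentBound r ρ η ε L := by
  have hρ : 0 < ρ := hε.trans_lt hερ
  set K := (2 * ρ) ^ (r - 1) + 1 / ρ with hK
  set S : Ω → ℝ := fun ω => ⨆ n, selfNormalized r η L (A n ω) (B n ω)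
  have htail (m : ℕ) : μ {ω | (m : ℝ) < ρ * (S ω - K)} ≤
      ENNReal.ofReal (Real.exp (-m)) * ∑' k, ENNReal.ofReal (Real.exp (-scaleCost L η k)) := by
    refine (measure_mono fun ω (hω : m < ρ * (S ω - K)) => ?_).trans
      (measure_exists_lt_selfNormalized_le hr hρ hη hρη hLpos hLmono hA0 hB hM m.cast_nonneg)
    rw [← div_lt_iff₀' hρ, lt_sub_iff_add_lt', hK, add_assoc, ← add_div] at hω
    exact exists_lt_of_lt_ciSup hω
  have hsplit (ω) : ENNReal.ofReal (Real.exp (ε * S ω)) =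
      ENNReal.ofReal (Real.exp (ε * K)) *
        ENNReal.ofReal (Real.exp (ε / ρ * (ρ * (S ω - K)))) := by
    rw [← ENNReal.ofReal_mul (Real.exp_pos _).le, ← Real.exp_add]
    congr 2
    field_simp
    ring
  simp only [S] at hsplit ⊢
  rw [lintegral_congr hsplit, lintegral_const_mul' _ _ ENNReal.ofReal_ne_top, expMomentBound]
  gcongr
  simpa only [measure_univ] using lintegral_exp_mul_le_of_measure_lt_le (div_nonneg hε hρ.le)
    ((div_lt_one hρ).2 hερ) htail

end MomentBound

theorem stmt_13_general.{u} {r lam₀ η ε : ℝ} (hr : 1 ≤ r) (hη : 0 < η) (hε0 : 0 ≤ ε)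
    (hε : ε < lam₀ * η) {L : ℝ → ℝ} (hLpos : ∀ x, 1 ≤ x → 0 < L x)
    (hLmono : MonotoneOn L (Set.Ici 1))
    (hLint : IntegrableOn (fun x => (x * L x)⁻¹) (Set.Ioi 1))
    {h : ℝ → ℝ} (hmono : MonotoneOn h (Set.Ici 0))
    (hexp : ∀ᶠ x in Filter.atTop, h x ≤ Real.exp (ε * x)) :
    ∃ C : ℝ, ∀ (Ω : Type u) (mΩ : MeasurableSpace Ω) (μ : Measure Ω), IsProbabilityMeasure μ →
      ∀ (ℱ : Filtration ℕ mΩ) (A B : ℕ → Ω → ℝ), (∀ ω, A 0 ω = 0) →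
      (∀ n, 1 ≤ n → ∀ ω, 0 < B n ω) →
      (∀ lam, 0 < lam → lam < lam₀ →
        Supermartingale (fun n ω => compensatedExp r lam (A n ω) (B n ω)) ℱ μ ∧
          ∫ ω, compensatedExp r lam (A 0 ω) (B 0 ω) ∂μ ≤ 1) →
      ∫⁻ ω, ENNReal.ofReal (h (⨆ n, selfNormalized r η L (A n ω) (B n ω))) ∂μ ≤
        ENNReal.ofReal C := by
  obtain ⟨D, hD0, hD⟩ := exists_le_mul_exp_of_eventually_le_exp hmono hexp
  obtain ⟨ρ, hερ, hρ⟩ := exists_between hε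
  refine ⟨(ENNReal.ofReal D * expMomentBound r ρ η ε L).toReal,
    fun Ω mΩ μ _ ℱ A B hA0 hB hM => ?_⟩
  rw [ENNReal.ofReal_toReal (ENNReal.mul_ne_top ENNReal.ofReal_ne_top
    (expMomentBound_ne_top hη hLpos hLmono hLint r ρ ε))]
  set S : Ω → ℝ := fun ω => ⨆ n, selfNormalized r η L (A n ω) (B n ω)
  have hS (ω) : 0 ≤ S ω := Real.iSup_nonneg' ⟨0, by simp [selfNormalized, hA0]⟩
  calc ∫⁻ ω, ENNReal.ofReal (h (S ω)) ∂μ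
      ≤ ∫⁻ ω, ENNReal.ofReal D * ENNReal.ofReal (Real.exp (ε * S ω)) ∂μ := by
        refine lintegral_mono fun ω => ?_
        rw [← ENNReal.ofReal_mul hD0]
        exact ENNReal.ofReal_le_ofReal (hD _ (hS ω))
    _ = ENNReal.ofReal D * ∫⁻ ω, ENNReal.ofReal (Real.exp (ε * S ω)) ∂μ :=
        lintegral_const_mul' _ _ ENNReal.ofReal_ne_top
    _ ≤ ENNReal.ofReal D * expMomentBound r ρ η ε L := by
        gcongr
        exact lintegral_exp_iSup_selfNormalized_le hr hε0 hερ hη hρ hLpos hLmono hA0 hB hM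

/-- Theorem 4.1 (discrete time). -/
theorem stmt_13 (r lam0 eta ε : ℝ) (hr1 : 1 < r) (hr2 : r ≤ 2) (hlam0 : 0 < lam0)
    (heta : 0 < eta) (hε0 : 0 < ε) (hε : ε < lam0 * eta)
    (L : ℝ → ℝ) (hLpos : ∀ x ≥ (1 : ℝ), 0 < L x)
    (hLmono : ∀ x y : ℝ, 1 ≤ x → x ≤ y → L x ≤ L y)
    (h31 : ∀ c ≥ (1 : ℝ), ∀ y ≥ (1 : ℝ), L (c * y) ≤ 3 * c * L y)
    (h32 : ∀ y ≥ (1 : ℝ), L (y ^ 2) ≤ 3 * L y)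
    (h33 : ∫ x in Set.Ioi (1 : ℝ), (x * L x)⁻¹ = 1 / 2)
    (h : ℝ → ℝ) (hh0 : ∀ x, 0 ≤ h x)
    (hhmono : ∀ x y : ℝ, 0 ≤ x → x ≤ y → h x ≤ h y)
    (hhexp : ∃ x₁ : ℝ, ∀ x ≥ x₁, h x ≤ Real.exp (ε * x)) :
    ∃ C : ℝ, ∀ (Ω : Type) (mΩ : MeasurableSpace Ω) (μ : Measure Ω),
      IsProbabilityMeasure μ →
      ∀ (ℱ : Filtration ℕ mΩ) (A B : ℕ → Ω → ℝ),
      Adapted ℱ A → Adapted ℱ B →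
      (∀ ω, A 0 ω = 0) →
      (∀ n, 1 ≤ n → ∀ ω, 0 < B n ω) →
      (∀ m n : ℕ, 1 ≤ m → m ≤ n → ∀ ω, B m ω ≤ B n ω) →
      (∀ lam : ℝ, 0 < lam → lam < lam0 →
        Supermartingale
          (fun n ω => Real.exp (lam * A n ω - (lam * B n ω) ^ r / r)) ℱ μ ∧
        ∀ n, ∫ ω, Real.exp (lam * A n ω - (lam * B n ω) ^ r / r) ∂μ ≤ 1) →
      ∫⁻ ω, ENNReal.ofReal
          (h (⨆ n, A n ω * (max (B n ω) eta)⁻¹ *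
            (max 1 (max (Real.log (L (max (B n ω) eta))) 0)) ^ (-((r - 1) / r)))) ∂μ ≤
        ENNReal.ofReal C := by
  obtain ⟨C, hC⟩ := stmt_13_general hr1.le heta hε0.le hε hLpos
    (fun x hx y _ hxy => hLmono x y hx hxy) (.of_integral_ne_zero (by rw [h33]; norm_num))
    (fun x hx y _ hxy => hhmono x y hx hxy) (Filter.eventually_atTop.2 hhexp)
  exact ⟨C, fun Ω mΩ μ hμ ℱ A B _ _ hA0 hB _ hM => hC Ω mΩ μ hμ ℱ A B hA0 hB
    fun lam hlam0 hlam => ⟨(hM lam hlam0 hlam).1, (hM lam hlam0 hlam).2 0⟩⟩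
end

section
/- Let (X_n) be a martingale difference sequence with respect to a filtration (F_n), i.e., X_n is F_n-measurable, integrable, and E(X_n | F_{n−1}) = 0 a.s. for all n. Set S_n = X₁ + ⋯ + X_n and V_n = ( X₁² + ⋯ + X_n² )^{1/2}. Suppose that for each n there is an F_{n−1}-measurable random variable m_n with |X_n| ≤ m_n a.s., and that almost surely V_n → ∞ and m_n / ( V_n·(log log V_n)^{−1/2} ) → 0 as n → ∞. Then limsup_{n→∞} S_n / ( V_n·(log log V_n)^{1/2} ) = √2 almost surely. -/
open MeasureTheory Filter

/-!
Increments `y` rescaled to be small satisfy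
`exp (y - (1 + δ) / 2 * y ^ 2) ≤ 1 + y ≤ exp (y - (1 - δ) / 2 * y ^ 2)`, so exponentials of the
partial sums, compensated by `(1 ± δ) / 2` times the quadratic variation `Q`, are super- and
submartingales. Rescale by `√(2 * log (k + 1) / R ^ (k + 1))` while `Q` runs through the `k`-th
block `[R ^ k, R ^ (k + 1))`; the bound on the increments is predictable, so an increment can be
switched off beforehand when its bound is too large.

For the upper bound, take `R` close to `1`. By Ville's inequality, the probabilities that the `k`-th
supermartingale ever exceeds `(k + 1) ^ (1 + δ)` are summable.

For the lower bound, take `R` large. The submartingale at rate `1`, minus small multiples of the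
supermartingales at rates `1 ± ε`, is bounded by a multiple of `k + 1`, and at the end of a block it
can be positive only if the rescaled partial sum exceeds `(1 - ε) * Q`. Betting the fraction
`c / (k + 1)` of the capital against it yields nonnegative supermartingales active on disjoint
blocks, so that their products are again supermartingales. As `∑ 1 / (k + 1)` diverges, Ville's
inequality forces infinitely many of these bets to fail; this replaces the converse Borel–Cantelli
lemma. The upper bound for `-X` controls the sum up to the start of a block.
-/

namespace MartingaleLIL

open scoped ProbabilityTheory

section Supermartingale

variable {Ω : Type*} {mΩ : MeasurableSpace Ω} {μ : Measure Ω} [IsFiniteMeasure μ]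
  {ℱ : Filtration ℕ mΩ}

lemma integral_stoppedValue_le_of_supermartingale {f : ℕ → Ω → ℝ} (hf : Supermartingale f ℱ μ)
    {τ : Ω → ℕ∞} (hτ : IsStoppingTime ℱ τ) {N : ℕ} (hle : ∀ ω, τ ω ≤ N) :
    μ[stoppedValue f τ] ≤ μ[f 0] := by
  have h := hf.neg.expected_stoppedValue_mono (isStoppingTime_const ℱ 0) hτ
    (fun _ => zero_le) hle
  have hneg : stoppedValue (-f) τ = -stoppedValue f τ := rfl
  rw [stoppedValue_const, hneg, Pi.neg_apply, integral_neg', integral_neg'] at h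
  exact neg_le_neg_iff.1 h

/-- **Ville's maximal inequality** -/
theorem measure_exists_ge_le_of_supermartingale {f : ℕ → Ω → ℝ} (hf : Supermartingale f ℱ μ)
    (hpos : ∀ n, 0 ≤ᵐ[μ] f n) {c : ℝ} (hc : 0 < c) :
    μ {ω | ∃ n, c ≤ f n ω} ≤ ENNReal.ofReal (μ[f 0] / c) := by
  have hmono : Monotone fun N => {ω | ∃ n ≤ N, c ≤ f n ω} :=
    fun _ _ hab _ ⟨n, hn, h⟩ => ⟨n, hn.trans hab, h⟩
  have hunion : {ω | ∃ n, c ≤ f n ω} = ⋃ N, {ω | ∃ n ≤ N, c ≤ f n ω} := by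
    ext ω
    simp only [Set.mem_ofPred_eq, Set.mem_iUnion]
    exact ⟨fun ⟨n, h⟩ => ⟨n, n, le_rfl, h⟩, fun ⟨_, n, _, h⟩ => ⟨n, h⟩⟩
  rw [hunion, hmono.measure_iUnion]
  refine iSup_le fun N => ?_
  set τ : Ω → ℕ∞ := fun ω => (hittingBtwn f (Set.Ici c) 0 N ω : ℕ)
  have hτ : IsStoppingTime ℱ τ :=
    hf.stronglyAdapted.adapted.isStoppingTime_hittingBtwn measurableSet_Ici
  have hτ_le : ∀ ω, τ ω ≤ N := fun ω => Nat.cast_le.2 (hittingBtwn_le ω)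
  have hnonneg : 0 ≤ᵐ[μ] stoppedValue f τ := by
    filter_upwards [ae_all_iff.2 hpos] with ω hω using hω _
  have hint : Integrable (stoppedValue f τ) μ :=
    integrable_stoppedValue ℕ hτ hf.integrable hτ_le
  have hsub : {ω | ∃ n ≤ N, c ≤ f n ω} ⊆ {ω | c ≤ stoppedValue f τ ω} :=
    fun ω ⟨n, hn, h⟩ => stoppedValue_hittingBtwn_mem ⟨n, ⟨zero_le, hn⟩, h⟩
  calc μ {ω | ∃ n ≤ N, c ≤ f n ω} ≤ μ {ω | c ≤ stoppedValue f τ ω} := measure_mono hsub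
    _ = ENNReal.ofReal (μ.real {ω | c ≤ stoppedValue f τ ω}) := by rw [ofReal_measureReal]
    _ ≤ ENNReal.ofReal (μ[f 0] / c) := by
      refine ENNReal.ofReal_le_ofReal ((le_div_iff₀' hc).2 ?_)
      exact (mul_meas_ge_le_integral_of_nonneg hnonneg hint c).trans
        (integral_stoppedValue_le_of_supermartingale hf hτ hτ_le)

theorem ae_eventually_forall_lt_of_supermartingale {f : ℕ → ℕ → Ω → ℝ}
    (hf : ∀ k, Supermartingale (f k) ℱ μ) (hpos : ∀ k n, 0 ≤ᵐ[μ] f k n) {c : ℕ → ℝ}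
    (hc : ∀ k, 0 < c k) (hsum : Summable fun k => μ[f k 0] / c k) :
    ∀ᵐ ω ∂μ, ∀ᶠ k in atTop, ∀ n, f k n ω < c k := by
  have htsum : ∑' k, μ {ω | ∃ n, c k ≤ f k n ω} ≠ ⊤ :=
    ne_top_of_le_ne_top hsum.tsum_ofReal_ne_top <| ENNReal.tsum_le_tsum fun k =>
      measure_exists_ge_le_of_supermartingale (hf k) (hpos k) (hc k)
  filter_upwards [ae_eventually_notMem htsum] with ω hω
  filter_upwards [hω] with k hk n
  exact not_le.1 fun h => hk ⟨n, h⟩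

lemma supermartingale_mul {f g : ℕ → Ω → ℝ} (hf : Supermartingale f ℱ μ)
    (hg : Supermartingale g ℱ μ) (hf_top : ∀ n, MemLp (f n) ⊤ μ) (hg_top : ∀ n, MemLp (g n) ⊤ μ)
    (hf_nonneg : ∀ n, 0 ≤ᵐ[μ] f n) (hg_nonneg : ∀ n, 0 ≤ᵐ[μ] g n) {A : ℕ → Set Ω}
    (hA : ∀ n, MeasurableSet[ℱ n] (A n)) (hf_eq : ∀ n, ∀ ω ∉ A n, f (n + 1) ω = f n ω)
    (hg_eq : ∀ n, ∀ ω ∈ A n, g (n + 1) ω = g n ω) :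
    Supermartingale (f * g) ℱ μ := by
  have hint : ∀ m n, Integrable (f m * g n) μ := fun m n =>
    ((hg_top n).mul (hf_top m) (r := ⊤)).integrable le_top
  refine supermartingale_nat (fun n => (hf.stronglyMeasurable n).mul (hg.stronglyMeasurable n))
    (fun n => hint n n) fun n => ?_
  have hsplit : (f * g) (n + 1)
      = (A n).indicator (g n * f (n + 1)) + (A n)ᶜ.indicator (f n * g (n + 1)) := by
    ext ω
    by_cases hω : ω ∈ A n <;>
      simp [hω, mul_comm, hf_eq n ω, hg_eq n ω]
  have hint' : Integrable (g n * f (n + 1)) μ := by rw [mul_comm]; exact hint _ _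
  have hgf : μ[g n * f (n + 1) | ℱ n] =ᵐ[μ] g n * μ[f (n + 1) | ℱ n] :=
    condExp_mul_of_stronglyMeasurable_left (hg.stronglyMeasurable n) hint' (hf.integrable _)
  have hfg : μ[f n * g (n + 1) | ℱ n] =ᵐ[μ] f n * μ[g (n + 1) | ℱ n] :=
    condExp_mul_of_stronglyMeasurable_left (hf.stronglyMeasurable n) (hint _ _) (hg.integrable _)
  rw [hsplit]
  filter_upwards [hgf, hfg, hf.2.1 n (n + 1) n.le_succ, hg.2.1 n (n + 1) n.le_succ,
    hf_nonneg n, hg_nonneg n,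
    condExp_add (m := ℱ n) (hint'.indicator (ℱ.le n _ (hA n)))
      ((hint n (n + 1)).indicator (ℱ.le n _ (hA n).compl)),
    condExp_indicator hint' (hA n), condExp_indicator (hint n (n + 1)) (hA n).compl]
    with ω h₁ h₂ h₃ h₄ h₅ h₆ h₇ h₈ h₉
  rw [h₇, Pi.add_apply, h₈, h₉]
  by_cases hω : ω ∈ A n
  · simpa [hω, h₁, mul_comm] using mul_le_mul_of_nonneg_left h₃ h₆
  · simpa [hω, h₂] using mul_le_mul_of_nonneg_left h₄ h₅

lemma memLp_top_prod {ι : Type*} {f : ι → Ω → ℝ} {s : Finset ι}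
    (hf : ∀ i ∈ s, MemLp (f i) ⊤ μ) : MemLp (∏ i ∈ s, f i) ⊤ μ := by
  classical
  induction s using Finset.induction_on with
  | empty => exact memLp_const (1 : ℝ)
  | insert i s hi ih =>
    rw [Finset.prod_insert hi]
    exact (ih fun j hj => hf j (Finset.mem_insert_of_mem hj)).mul
      (hf i (Finset.mem_insert_self i s))

lemma supermartingale_prod {ι : Type*} {f : ι → ℕ → Ω → ℝ} (s : Finset ι)
    (hf : ∀ i, Supermartingale (f i) ℱ μ) (hf_top : ∀ i n, MemLp (f i n) ⊤ μ)
    (hf_nonneg : ∀ i n, 0 ≤ᵐ[μ] f i n) {A : ι → ℕ → Set Ω}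
    (hA : ∀ i n, MeasurableSet[ℱ n] (A i n))
    (hdisj : ∀ n, Pairwise fun i j => Disjoint (A i n) (A j n))
    (hf_eq : ∀ i n, ∀ ω ∉ A i n, f i (n + 1) ω = f i n ω) :
    Supermartingale (fun n => ∏ i ∈ s, f i n) ℱ μ := by
  classical
  induction s using Finset.induction_on with
  | empty => exact (martingale_const ℱ μ (1 : ℝ)).supermartingale
  | insert i s hi ih =>
    have hprod_nonneg : ∀ n, 0 ≤ᵐ[μ] ∏ j ∈ s, f j n := fun n => by
      filter_upwards [(Finset.eventually_all s).2 fun j _ => hf_nonneg j n] with ω hω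
      rw [Finset.prod_apply]
      exact Finset.prod_nonneg hω
    have hprod_eq : ∀ n, ∀ ω ∈ A i n, (∏ j ∈ s, f j (n + 1)) ω = (∏ j ∈ s, f j n) ω :=
      fun n ω hω => by
        simp only [Finset.prod_apply]
        refine Finset.prod_congr rfl fun j hj => hf_eq j n ω fun hωj => ?_
        exact (hdisj n (ne_of_mem_of_not_mem hj hi)).notMem_of_mem_left hωj hω
    simp only [Finset.prod_insert hi]
    exact supermartingale_mul (hf i) ih (hf_top i)
      (fun n => memLp_top_prod fun j _ => hf_top j n) (hf_nonneg i) hprod_nonneg (hA i)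
      (hf_eq i) hprod_eq

lemma one_add_sum_le_prod_one_add {ι : Type*} (s : Finset ι) {r : ι → ℝ} (hr : ∀ i, 0 ≤ r i) :
    1 + ∑ i ∈ s, r i ≤ ∏ i ∈ s, (1 + r i) := by
  classical
  induction s using Finset.induction_on with
  | empty => simp
  | insert i s hi ih =>
    rw [Finset.sum_insert hi, Finset.prod_insert hi]
    nlinarith [mul_nonneg (hr i) (Finset.sum_nonneg fun j (_ : j ∈ s) => hr j),
      mul_le_mul_of_nonneg_left ih (hr i)]

/-- The product of the `F k` would otherwise eventually exceed every `∏ k < K, (1 + r k)`, which is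
unbounded in `K`. -/
lemma ae_exists_frequently_lt_of_supermartingale {F : ℕ → ℕ → Ω → ℝ}
    (hF : ∀ k, Supermartingale (F k) ℱ μ) (hF_top : ∀ k n, MemLp (F k n) ⊤ μ)
    (hF_nonneg : ∀ k n, 0 ≤ᵐ[μ] F k n) (hF_zero : ∀ k ω, F k 0 ω = 1) {A : ℕ → ℕ → Set Ω}
    (hA : ∀ k n, MeasurableSet[ℱ n] (A k n))
    (hdisj : ∀ n, Pairwise fun j k => Disjoint (A j n) (A k n))
    (hF_eq : ∀ k n, ∀ ω ∉ A k n, F k (n + 1) ω = F k n ω) {r : ℕ → ℝ} (hr : ∀ k, 0 ≤ r k)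
    (hsum : ¬ Summable r) :
    ∀ᵐ ω ∂μ, ∃ k, ∃ᶠ n in atTop, F k n ω < 1 + r k := by
  set P : ℕ → ℝ := fun K => ∏ k ∈ Finset.range K, (1 + r k)
  have hP_pos : ∀ K, 0 < P K := fun K => Finset.prod_pos fun k _ => by linarith [hr k]
  have hP_top : Tendsto P atTop atTop := by
    refine tendsto_atTop_mono (fun K => ?_)
      ((not_summable_iff_tendsto_nat_atTop_of_nonneg hr).1 hsum)
    linarith [one_add_sum_le_prod_one_add (Finset.range K) hr]
  have hville : ∀ K, μ {ω | ∃ n, P K ≤ ∏ k ∈ Finset.range K, F k n ω}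
      ≤ ENNReal.ofReal (μ.real Set.univ / P K) := fun K => by
    have hnonneg : ∀ n, 0 ≤ᵐ[μ] ∏ k ∈ Finset.range K, F k n := fun n => by
      filter_upwards [ae_all_iff.2 fun k => hF_nonneg k n] with ω hω
      rw [Finset.prod_apply]
      exact Finset.prod_nonneg fun k _ => hω k
    simpa [hF_zero] using measure_exists_ge_le_of_supermartingale
      (supermartingale_prod (Finset.range K) hF hF_top hF_nonneg hA hdisj hF_eq) hnonneg (hP_pos K)
  have hle : ∀ K, μ {ω | ∀ k, ∀ᶠ n in atTop, 1 + r k ≤ F k n ω}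
      ≤ ENNReal.ofReal (μ.real Set.univ / P K) := fun K => by
    refine (measure_mono fun ω hω => ?_).trans (hville K)
    obtain ⟨n, hn⟩ := ((Finset.eventually_all (Finset.range K)).2 fun k _ => hω k).exists
    exact ⟨n, Finset.prod_le_prod (fun k _ => by linarith [hr k]) hn⟩
  have hlim : Tendsto (fun K => ENNReal.ofReal (μ.real Set.univ / P K)) atTop (nhds 0) := by
    simpa using ENNReal.tendsto_ofReal (hP_top.const_div_atTop (μ.real Set.univ))
  rw [ae_iff]
  simpa only [not_exists, not_frequently, not_lt] using
    le_antisymm (ge_of_tendsto' hlim hle) zero_le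

theorem ae_frequently_frequently_lt_of_supermartingale {F : ℕ → ℕ → Ω → ℝ}
    (hF : ∀ k, Supermartingale (F k) ℱ μ) (hF_top : ∀ k n, MemLp (F k n) ⊤ μ)
    (hF_nonneg : ∀ k n, 0 ≤ᵐ[μ] F k n) (hF_zero : ∀ k ω, F k 0 ω = 1) {A : ℕ → ℕ → Set Ω}
    (hA : ∀ k n, MeasurableSet[ℱ n] (A k n))
    (hdisj : ∀ n, Pairwise fun j k => Disjoint (A j n) (A k n))
    (hF_eq : ∀ k n, ∀ ω ∉ A k n, F k (n + 1) ω = F k n ω) {r : ℕ → ℝ} (hr : ∀ k, 0 ≤ r k)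
    (hsum : ¬ Summable r) :
    ∀ᵐ ω ∂μ, ∃ᶠ k in atTop, ∃ᶠ n in atTop, F k n ω < 1 + r k := by
  have htail : ∀ k₀, ∀ᵐ ω ∂μ, ∃ k, ∃ᶠ n in atTop, F (k + k₀) n ω < 1 + r (k + k₀) := fun k₀ =>
    ae_exists_frequently_lt_of_supermartingale (fun k => hF (k + k₀)) (fun k => hF_top (k + k₀))
      (fun k => hF_nonneg (k + k₀)) (fun k => hF_zero (k + k₀)) (fun k => hA (k + k₀))
      (fun n => (hdisj n).comp_of_injective (add_left_injective k₀)) (fun k => hF_eq (k + k₀))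
      (fun k => hr (k + k₀)) (mt (summable_nat_add_iff k₀).1 hsum)
  filter_upwards [ae_all_iff.2 htail] with ω hω
  refine frequently_atTop.2 fun k₀ => ?_
  obtain ⟨k, hk⟩ := hω k₀
  exact ⟨k + k₀, Nat.le_add_left _ _, hk⟩

/-- Betting the fraction `1 / c k` of the current capital against each payoff `L k` yields
nonnegative supermartingales that are below `1 + a / c k` exactly when `L k` is positive. -/
theorem ae_frequently_frequently_pos_of_submartingale {L : ℕ → ℕ → Ω → ℝ}
    (hL : ∀ k, Submartingale (L k) ℱ μ) (hL_top : ∀ k n, MemLp (L k n) ⊤ μ) {a : ℝ} (ha : 0 ≤ a)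
    (hL_zero : ∀ k ω, L k 0 ω = a) {c : ℕ → ℝ} (hc : ∀ k, 0 < c k)
    (hL_le : ∀ k n, ∀ᵐ ω ∂μ, L k n ω ≤ c k) {A : ℕ → ℕ → Set Ω}
    (hA : ∀ k n, MeasurableSet[ℱ n] (A k n))
    (hdisj : ∀ n, Pairwise fun j k => Disjoint (A j n) (A k n))
    (hL_eq : ∀ k n, ∀ ω ∉ A k n, L k (n + 1) ω = L k n ω) (hsum : ¬ Summable fun k => a / c k) :
    ∀ᵐ ω ∂μ, ∃ᶠ k in atTop, ∃ᶠ n in atTop, 0 < L k n ω := by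
  set F : ℕ → ℕ → Ω → ℝ := fun k n ω => 1 + (a / c k - (c k)⁻¹ * L k n ω)
  have hF : ∀ k, Supermartingale (F k) ℱ μ := fun k =>
    (martingale_const ℱ μ (1 : ℝ)).supermartingale.add
      ((martingale_const ℱ μ (a / c k)).supermartingale.sub_submartingale
        ((hL k).smul_nonneg (inv_nonneg.2 (hc k).le)))
  have hF_top : ∀ k n, MemLp (F k n) ⊤ μ := fun k n => by
    have hbet : MemLp (fun ω => (c k)⁻¹ * L k n ω) ⊤ μ := (hL_top k n).const_mul _
    exact (memLp_const (1 : ℝ)).add ((memLp_const (a / c k)).sub hbet)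
  have hF_nonneg : ∀ k n, 0 ≤ᵐ[μ] F k n := fun k n => by
    filter_upwards [hL_le k n] with ω hω
    have : (c k)⁻¹ * L k n ω ≤ 1 := (inv_mul_le_one₀ (hc k)).2 hω
    have : 0 ≤ a / c k := div_nonneg ha (hc k).le
    simp only [F, Pi.zero_apply]
    linarith
  have hF_zero : ∀ k ω, F k 0 ω = 1 := fun k ω => by
    simp only [F, hL_zero]
    ring
  have hF_eq : ∀ k n, ∀ ω ∉ A k n, F k (n + 1) ω = F k n ω := fun k n ω hω => by
    simp only [F, hL_eq k n ω hω]
  filter_upwards [ae_frequently_frequently_lt_of_supermartingale hF hF_top hF_nonneg hF_zero hA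
    hdisj hF_eq (fun k => div_nonneg ha (hc k).le) hsum] with ω hω
  refine hω.mono fun k hk => hk.mono fun n hn => ?_
  have : 0 < (c k)⁻¹ * L k n ω := by
    simp only [F] at hn
    linarith
  exact (pos_iff_pos_of_mul_pos this).1 (inv_pos.2 (hc k))

end Supermartingale

/-- The sum of squares of the first `n` terms. For a process `Y`, the quadratic variation along the
path `ω` is `quadVar (Y · ω)`. -/
noncomputable def quadVar (x : ℕ → ℝ) (n : ℕ) : ℝ := ∑ i ∈ Finset.range n, x i ^ 2

lemma quadVar_nonneg (x : ℕ → ℝ) (n : ℕ) : 0 ≤ quadVar x n :=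
  Finset.sum_nonneg fun _ _ => sq_nonneg _

lemma quadVar_succ (x : ℕ → ℝ) (n : ℕ) : quadVar x (n + 1) = quadVar x n + x n ^ 2 :=
  Finset.sum_range_succ _ _

lemma quadVar_mono (x : ℕ → ℝ) : Monotone (quadVar x) :=
  monotone_nat_of_le_succ fun n => by
    rw [quadVar_succ]
    exact le_add_of_nonneg_right (sq_nonneg _)

lemma quadVar_const_mul (c : ℝ) (x : ℕ → ℝ) (n : ℕ) :
    quadVar (fun i => c * x i) n = c ^ 2 * quadVar x n := by
  simp only [quadVar, mul_pow, Finset.mul_sum]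

section ExpInequalities

lemma abs_log_one_add_sub_le {y δ : ℝ} (hδ : δ ≤ 1) (hy : |y| ≤ δ / 4) :
    |Real.log (1 + y) - (y - y ^ 2 / 2)| ≤ δ / 2 * y ^ 2 := by
  have htaylor := Real.abs_log_sub_add_sum_range_le (x := -y) (by rw [abs_neg]; linarith) 2
  have hremainder : |y| ^ 3 / (1 - |y|) ≤ δ / 2 * y ^ 2 := by
    rw [div_le_iff₀ (by linarith), ← sq_abs y]
    nlinarith [mul_nonneg (sq_nonneg |y|) (abs_nonneg y),
      mul_nonneg (sq_nonneg |y|) (sub_nonneg.2 hy)]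
  rw [abs_neg, sub_neg_eq_add, Finset.sum_range_succ, Finset.sum_range_one] at htaylor
  norm_num at htaylor
  refine le_trans (le_of_eq ?_) (htaylor.trans hremainder)
  congr 1
  ring

lemma one_add_pos_of_abs_le {y δ : ℝ} (hδ : δ ≤ 1) (hy : |y| ≤ δ / 4) : 0 < 1 + y := by
  linarith [neg_abs_le y]

lemma exp_le_one_add {y δ : ℝ} (hδ : δ ≤ 1) (hy : |y| ≤ δ / 4) :
    Real.exp (y - (1 + δ) / 2 * y ^ 2) ≤ 1 + y := by
  rw [← Real.le_log_iff_exp_le (one_add_pos_of_abs_le hδ hy)]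
  linarith [(abs_le.1 (abs_log_one_add_sub_le hδ hy)).1]

lemma one_add_le_exp {y δ : ℝ} (hδ : δ ≤ 1) (hy : |y| ≤ δ / 4) :
    1 + y ≤ Real.exp (y - (1 - δ) / 2 * y ^ 2) := by
  rw [← Real.log_le_iff_le_exp (one_add_pos_of_abs_le hδ hy)]
  linarith [(abs_le.1 (abs_log_one_add_sub_le hδ hy)).2]

end ExpInequalities

/-- `Y` is a martingale difference sequence; the indices are shifted so that `Y n` is the increment
between times `n` and `n + 1`. -/
structure IsMartingaleDiff {Ω : Type*} {mΩ : MeasurableSpace Ω} (Y : ℕ → Ω → ℝ)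
    (ℱ : Filtration ℕ mΩ) (μ : Measure Ω) : Prop where
  stronglyMeasurable : ∀ n, StronglyMeasurable[ℱ (n + 1)] (Y n)
  integrable : ∀ n, Integrable (Y n) μ
  condExp_eq_zero : ∀ n, μ[Y n | ℱ n] =ᵐ[μ] 0

/-- The exponential of the `b`-compensated partial sums of `Y`. -/
noncomputable def expProcess {Ω : Type*} (b : ℝ) (Y : ℕ → Ω → ℝ) (n : ℕ) (ω : Ω) : ℝ :=
  Real.exp (∑ i ∈ Finset.range n, Y i ω - b * quadVar (Y · ω) n)

section MartingaleDiff

variable {Ω : Type*} {mΩ : MeasurableSpace Ω} {μ : Measure Ω} {ℱ : Filtration ℕ mΩ}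
  {Y : ℕ → Ω → ℝ}

namespace IsMartingaleDiff

lemma neg (hY : IsMartingaleDiff Y ℱ μ) : IsMartingaleDiff (-Y) ℱ μ where
  stronglyMeasurable n := (hY.stronglyMeasurable n).neg
  integrable n := (hY.integrable n).neg
  condExp_eq_zero n := by
    filter_upwards [condExp_neg (Y n) (ℱ n) (μ := μ), hY.condExp_eq_zero n] with ω h₁ h₂
    simp [h₁, h₂]

lemma const_smul (hY : IsMartingaleDiff Y ℱ μ) (c : ℝ) : IsMartingaleDiff (c • Y) ℱ μ where
  stronglyMeasurable n := (hY.stronglyMeasurable n).const_smul c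
  integrable n := (hY.integrable n).smul c
  condExp_eq_zero n := by
    filter_upwards [condExp_smul c (Y n) (ℱ n) (μ := μ), hY.condExp_eq_zero n] with ω h₁ h₂
    simp [h₁, h₂]

lemma indicator (hY : IsMartingaleDiff Y ℱ μ) {A : ℕ → Set Ω}
    (hA : ∀ n, MeasurableSet[ℱ n] (A n)) :
    IsMartingaleDiff (fun n => (A n).indicator (Y n)) ℱ μ where
  stronglyMeasurable n := (hY.stronglyMeasurable n).indicator (ℱ.mono n.le_succ _ (hA n))
  integrable n := (hY.integrable n).indicator (ℱ.le n _ (hA n))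
  condExp_eq_zero n := by
    filter_upwards [condExp_indicator (hY.integrable n) (hA n), hY.condExp_eq_zero n] with ω h₁ h₂
    simp [h₁, h₂]

lemma stronglyMeasurable_sum (hY : IsMartingaleDiff Y ℱ μ) (n : ℕ) :
    StronglyMeasurable[ℱ n] fun ω => ∑ i ∈ Finset.range n, Y i ω :=
  Finset.stronglyMeasurable_fun_sum _ fun i hi =>
    (hY.stronglyMeasurable i).mono (ℱ.mono (Finset.mem_range.1 hi))

lemma stronglyMeasurable_quadVar (hY : IsMartingaleDiff Y ℱ μ) (n : ℕ) :
    StronglyMeasurable[ℱ n] fun ω => quadVar (Y · ω) n :=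
  Finset.stronglyMeasurable_fun_sum _ fun i hi =>
    ((hY.stronglyMeasurable i).mono (ℱ.mono (Finset.mem_range.1 hi))).pow 2

lemma condExp_mul_one_add [IsFiniteMeasure μ] (hY : IsMartingaleDiff Y ℱ μ) {n : ℕ} {Z : Ω → ℝ}
    (hZ : StronglyMeasurable[ℱ n] Z) (hZ_top : MemLp Z ⊤ μ) :
    μ[Z * (1 + Y n) | ℱ n] =ᵐ[μ] Z := by
  have hint : Integrable (Z * Y n) μ := by
    have h := MemLp.mul (r := 1) (memLp_one_iff_integrable.2 (hY.integrable n)) hZ_top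
    exact memLp_one_iff_integrable.1 h
  have hZ_int : Integrable Z μ := hZ_top.integrable le_top
  rw [mul_add, mul_one]
  filter_upwards [condExp_add hZ_int hint (ℱ n),
    condExp_mul_of_stronglyMeasurable_left hZ hint (hY.integrable n), hY.condExp_eq_zero n]
    with ω h₁ h₂ h₃
  rw [h₁, Pi.add_apply, h₂, Pi.mul_apply, h₃, condExp_of_stronglyMeasurable (ℱ.le n) hZ hZ_int,
    Pi.zero_apply, mul_zero, add_zero]

lemma supermartingale_of_le_mul_one_add [IsFiniteMeasure μ] (hY : IsMartingaleDiff Y ℱ μ)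
    {Z : ℕ → Ω → ℝ} (hZ : StronglyAdapted ℱ Z) (hZ_top : ∀ n, MemLp (Z n) ⊤ μ)
    (hle : ∀ n, Z (n + 1) ≤ᵐ[μ] Z n * (1 + Y n)) : Supermartingale Z ℱ μ := by
  have hint : ∀ n, Integrable (Z n) μ := fun n => (hZ_top n).integrable le_top
  refine supermartingale_nat hZ hint fun n => ?_
  have hmul : Integrable (Z n * (1 + Y n)) μ := by
    have h := MemLp.mul (r := 1)
      ((memLp_const (1 : ℝ)).add (memLp_one_iff_integrable.2 (hY.integrable n))) (hZ_top n)
    exact memLp_one_iff_integrable.1 h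
  exact (condExp_mono (hint (n + 1)) hmul (hle n)).trans
    (hY.condExp_mul_one_add (hZ n) (hZ_top n)).le

lemma submartingale_of_mul_one_add_le [IsFiniteMeasure μ] (hY : IsMartingaleDiff Y ℱ μ)
    {Z : ℕ → Ω → ℝ} (hZ : StronglyAdapted ℱ Z) (hZ_top : ∀ n, MemLp (Z n) ⊤ μ)
    (hle : ∀ n, Z n * (1 + Y n) ≤ᵐ[μ] Z (n + 1)) : Submartingale Z ℱ μ := by
  rw [← neg_neg Z]
  refine (hY.supermartingale_of_le_mul_one_add hZ.neg (fun n => (hZ_top n).neg) fun n => ?_).neg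
  filter_upwards [hle n] with ω hω
  simpa using hω

end IsMartingaleDiff

lemma expProcess_zero (b : ℝ) (Y : ℕ → Ω → ℝ) (ω : Ω) : expProcess b Y 0 ω = 1 := by
  simp [expProcess, quadVar]

lemma expProcess_succ (b : ℝ) (Y : ℕ → Ω → ℝ) (n : ℕ) (ω : Ω) :
    expProcess b Y (n + 1) ω = expProcess b Y n ω * Real.exp (Y n ω - b * Y n ω ^ 2) := by
  rw [expProcess, expProcess, ← Real.exp_add, Finset.sum_range_succ, quadVar_succ]
  congr 1
  ring

lemma expProcess_nonneg (b : ℝ) (Y : ℕ → Ω → ℝ) (n : ℕ) (ω : Ω) : 0 ≤ expProcess b Y n ω :=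
  (Real.exp_pos _).le

lemma stronglyAdapted_expProcess (hY : IsMartingaleDiff Y ℱ μ) (b : ℝ) :
    StronglyAdapted ℱ (expProcess b Y) := fun n =>
  Real.continuous_exp.comp_stronglyMeasurable
    ((hY.stronglyMeasurable_sum n).sub ((hY.stronglyMeasurable_quadVar n).const_mul b))

lemma memLp_top_expProcess [IsFiniteMeasure μ] (hY : IsMartingaleDiff Y ℱ μ) {b ρ : ℝ} (hb : 0 ≤ b)
    (hρ : ∀ n, ∀ᵐ ω ∂μ, |Y n ω| ≤ ρ) (n : ℕ) : MemLp (expProcess b Y n) ⊤ μ := by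
  refine memLp_top_of_bound ((stronglyAdapted_expProcess hY b n).mono (ℱ.le n)).aestronglyMeasurable
    (Real.exp (n * ρ)) ?_
  filter_upwards [ae_all_iff.2 hρ] with ω hω
  have hsum : ∑ i ∈ Finset.range n, Y i ω ≤ n * ρ := by
    simpa using Finset.sum_le_card_nsmul (Finset.range n) (Y · ω) ρ
      fun i _ => (le_abs_self _).trans (hω i)
  rw [Real.norm_of_nonneg (expProcess_nonneg b Y n ω)]
  exact Real.exp_le_exp.2 (by linarith [mul_nonneg hb (quadVar_nonneg (Y · ω) n)])

lemma supermartingale_expProcess [IsFiniteMeasure μ] (hY : IsMartingaleDiff Y ℱ μ) {δ : ℝ}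
    (hδ₀ : 0 ≤ δ) (hδ₁ : δ ≤ 1) (hle : ∀ n, ∀ᵐ ω ∂μ, |Y n ω| ≤ δ / 4) :
    Supermartingale (expProcess ((1 + δ) / 2) Y) ℱ μ := by
  refine hY.supermartingale_of_le_mul_one_add (stronglyAdapted_expProcess hY _)
    (memLp_top_expProcess hY (by linarith) hle) fun n => ?_
  filter_upwards [hle n] with ω hω
  rw [expProcess_succ]
  exact mul_le_mul_of_nonneg_left (exp_le_one_add hδ₁ hω) (expProcess_nonneg _ Y n ω)

lemma submartingale_expProcess [IsFiniteMeasure μ] (hY : IsMartingaleDiff Y ℱ μ) {δ : ℝ}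
    (hδ : δ ≤ 1) (hle : ∀ n, ∀ᵐ ω ∂μ, |Y n ω| ≤ δ / 4) :
    Submartingale (expProcess ((1 - δ) / 2) Y) ℱ μ := by
  refine hY.submartingale_of_mul_one_add_le (stronglyAdapted_expProcess hY _)
    (memLp_top_expProcess hY (by linarith) hle) fun n => ?_
  filter_upwards [hle n] with ω hω
  rw [expProcess_succ]
  exact mul_le_mul_of_nonneg_left (one_add_le_exp hδ hω) (expProcess_nonneg _ Y n ω)

theorem ae_eventually_sum_sub_quadVar_lt [IsFiniteMeasure μ] {Y : ℕ → ℕ → Ω → ℝ}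
    (hY : ∀ k, IsMartingaleDiff (Y k) ℱ μ) {δ : ℝ} (hδ₀ : 0 < δ) (hδ₁ : δ ≤ 1)
    (hle : ∀ k n, ∀ᵐ ω ∂μ, |Y k n ω| ≤ δ / 4) :
    ∀ᵐ ω ∂μ, ∀ᶠ k : ℕ in atTop, ∀ n,
      ∑ i ∈ Finset.range n, Y k i ω - (1 + δ) / 2 * quadVar (Y k · ω) n
        < (1 + δ) * Real.log (k + 1) := by
  have hsum : Summable fun k : ℕ =>
      μ[expProcess ((1 + δ) / 2) (Y k) 0] / ((k : ℝ) + 1) ^ (1 + δ) := by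
    have h := (Real.summable_one_div_nat_rpow (p := 1 + δ)).2 (by linarith)
    simpa [expProcess_zero, div_eq_mul_inv] using
      ((summable_nat_add_iff 1).2 h).mul_left (μ.real Set.univ)
  filter_upwards [ae_eventually_forall_lt_of_supermartingale
    (fun k => supermartingale_expProcess (hY k) hδ₀.le hδ₁ (hle k))
    (fun k n => Eventually.of_forall (expProcess_nonneg _ (Y k) n))
    (fun k => by positivity) hsum] with ω hω
  filter_upwards [hω] with k hk n
  have h := hk n
  rw [expProcess, Real.rpow_def_of_pos (by positivity), Real.exp_lt_exp] at h
  linarith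

end MartingaleDiff

/-- The payoff, at a time when the partial sum is `d` and the quadratic variation is `u`, of a unit
stake on the exponential submartingale at rate `1` against a quarter of a unit on each of the
exponential supermartingales at rates `1 + ε` and `1 - ε`. The bets at rates `1 ± ε` win when `d`
leaves the range `[(1 - ε) * u, (1 + ε) * u]`, up to a constant. -/
noncomputable def payoff (ε d u : ℝ) : ℝ :=
  Real.exp (d - (1 - ε ^ 2 / 16) / 2 * u)
    - 1 / 4 * Real.exp ((1 + ε) * d - (1 + ε ^ 2 / 16) / 2 * ((1 + ε) ^ 2 * u))
    - 1 / 4 * Real.exp ((1 - ε) * d - (1 + ε ^ 2 / 16) / 2 * ((1 - ε) ^ 2 * u))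

section Payoff

lemma exp_le_quarter_mul_exp {a b : ℝ} (h : a + Real.log 4 ≤ b) :
    Real.exp a ≤ 1 / 4 * Real.exp b := by
  have := Real.exp_le_exp.2 h
  rw [Real.exp_add, Real.exp_log (by norm_num)] at this
  linarith

variable {ε d u : ℝ}

lemma payoff_le (hε₀ : 0 < ε) (hε₁ : ε ≤ 1 / 4) (hu : 0 ≤ u) :
    payoff ε d u ≤ Real.exp (Real.log 4 / ε) * Real.exp ((1 / 2 + 2 * ε) * u) := by
  have hbet₁ := Real.exp_pos ((1 + ε) * d - (1 + ε ^ 2 / 16) / 2 * ((1 + ε) ^ 2 * u))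
  have hbet₂ := Real.exp_pos ((1 - ε) * d - (1 + ε ^ 2 / 16) / 2 * ((1 - ε) ^ 2 * u))
  have hsq : ε ^ 2 ≤ ε := by nlinarith
  rw [← Real.exp_add]
  rcases le_or_gt d ((1 + ε) * u + Real.log 4 / ε) with hd | hd
  · have : Real.exp (d - (1 - ε ^ 2 / 16) / 2 * u)
        ≤ Real.exp (Real.log 4 / ε + (1 / 2 + 2 * ε) * u) := by
      refine Real.exp_le_exp.2 ?_
      nlinarith [mul_nonneg hu hε₀.le, mul_le_mul_of_nonneg_left hsq hu]
    rw [payoff]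
    linarith
  · have hεd : Real.log 4 + (1 + ε) * ε * u ≤ ε * d := by
      have h := mul_le_mul_of_nonneg_left hd.le hε₀.le
      rw [mul_add, mul_div_cancel₀ _ hε₀.ne'] at h
      linarith
    have : Real.exp (d - (1 - ε ^ 2 / 16) / 2 * u)
        ≤ 1 / 4 * Real.exp ((1 + ε) * d - (1 + ε ^ 2 / 16) / 2 * ((1 + ε) ^ 2 * u)) := by
      have hcoeff : ε ^ 2 / 16 / 2 * ((1 + ε) ^ 2 + 1) ≤ ε ^ 2 / 8 := by nlinarith [sq_nonneg ε]
      refine exp_le_quarter_mul_exp ?_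
      nlinarith [mul_le_mul_of_nonneg_left hcoeff hu, mul_nonneg hu (sq_nonneg ε)]
    rw [payoff]
    linarith [Real.exp_pos (Real.log 4 / ε + (1 / 2 + 2 * ε) * u)]

lemma lt_of_payoff_pos (hε₀ : 0 < ε) (hε₁ : ε ≤ 1) (hu : 4 * Real.log 4 ≤ ε ^ 2 * u)
    (hpos : 0 < payoff ε d u) : (1 - ε) * u < d := by
  by_contra! hd
  have hu₀ : 0 ≤ u := by
    have := Real.log_pos (show (1 : ℝ) < 4 by norm_num)
    exact (pos_iff_pos_of_mul_pos (a := ε ^ 2) (by linarith)).1 (by positivity) |>.le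
  have hbet := Real.exp_pos ((1 + ε) * d - (1 + ε ^ 2 / 16) / 2 * ((1 + ε) ^ 2 * u))
  have : Real.exp (d - (1 - ε ^ 2 / 16) / 2 * u)
      ≤ 1 / 4 * Real.exp ((1 - ε) * d - (1 + ε ^ 2 / 16) / 2 * ((1 - ε) ^ 2 * u)) := by
    have hcoeff : ε ^ 2 / 16 / 2 * ((1 - ε) ^ 2 + 1) ≤ ε ^ 2 / 16 := by
      have h := mul_le_mul_of_nonneg_left
        (pow_le_one₀ (n := 2) (sub_nonneg.2 hε₁) (by linarith)) (sq_nonneg ε)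
      linarith
    refine exp_le_quarter_mul_exp ?_
    nlinarith [mul_le_mul_of_nonneg_left hcoeff hu₀, mul_le_mul_of_nonneg_left hd hε₀.le]
  rw [payoff] at hpos
  linarith

end Payoff

section PayoffProcess

variable {Ω : Type*} {Y : ℕ → Ω → ℝ}

lemma payoff_eq_expProcess (ε : ℝ) (Y : ℕ → Ω → ℝ) :
    (fun n ω => payoff ε (∑ i ∈ Finset.range n, Y i ω) (quadVar (Y · ω) n))
      = expProcess ((1 - ε ^ 2 / 16) / 2) Y
        - (1 / 4 : ℝ) • expProcess ((1 + ε ^ 2 / 16) / 2) ((1 + ε) • Y)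
        - (1 / 4 : ℝ) • expProcess ((1 + ε ^ 2 / 16) / 2) ((1 - ε) • Y) := by
  ext n ω
  simp only [payoff, expProcess, Pi.sub_apply, Pi.smul_apply, smul_eq_mul, quadVar_const_mul,
    Finset.mul_sum]

variable {mΩ : MeasurableSpace Ω} {μ : Measure Ω} {ℱ : Filtration ℕ mΩ}

lemma ae_abs_smul_le {c : ℝ} (hle : ∀ n, ∀ᵐ ω ∂μ, |Y n ω| ≤ c) (a : ℝ) (n : ℕ) :
    ∀ᵐ ω ∂μ, |(a • Y) n ω| ≤ |a| * c := by
  filter_upwards [hle n] with ω hω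
  rw [Pi.smul_apply, Pi.smul_apply, smul_eq_mul, abs_mul]
  exact mul_le_mul_of_nonneg_left hω (abs_nonneg a)

variable [IsFiniteMeasure μ]

lemma submartingale_payoff (hY : IsMartingaleDiff Y ℱ μ) {ε : ℝ} (hε : |ε| ≤ 1)
    (hle : ∀ n, ∀ᵐ ω ∂μ, |Y n ω| ≤ ε ^ 2 / 128) :
    Submartingale (fun n ω => payoff ε (∑ i ∈ Finset.range n, Y i ω) (quadVar (Y · ω) n)) ℱ μ := by
  have hsq : ε ^ 2 ≤ 1 := (sq_le_one_iff_abs_le_one ε).2 hε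
  obtain ⟨hε₀, hε₁⟩ := abs_le.1 hε
  have hbet : ∀ a : ℝ, |a| ≤ 2 →
      Supermartingale (expProcess ((1 + ε ^ 2 / 16) / 2) (a • Y)) ℱ μ := fun a ha =>
    supermartingale_expProcess (hY.const_smul a) (by positivity) (by linarith) fun n =>
      (ae_abs_smul_le hle a n).mono fun ω h => h.trans (by nlinarith [sq_nonneg ε])
  have hstake : Submartingale (expProcess ((1 - ε ^ 2 / 16) / 2) Y) ℱ μ :=
    submartingale_expProcess hY (by linarith) fun n =>
      (hle n).mono fun ω h => h.trans (by linarith [sq_nonneg ε])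
  rw [payoff_eq_expProcess]
  exact (hstake.sub_supermartingale
    ((hbet (1 + ε) (abs_le.2 ⟨by linarith, by linarith⟩)).smul_nonneg (by norm_num))
    ).sub_supermartingale
      ((hbet (1 - ε) (abs_le.2 ⟨by linarith, by linarith⟩)).smul_nonneg (by norm_num))

lemma memLp_top_payoff (hY : IsMartingaleDiff Y ℱ μ) {ε ρ : ℝ} (hε : |ε| ≤ 1)
    (hle : ∀ n, ∀ᵐ ω ∂μ, |Y n ω| ≤ ρ) (n : ℕ) :
    MemLp (fun ω => payoff ε (∑ i ∈ Finset.range n, Y i ω) (quadVar (Y · ω) n)) ⊤ μ := by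
  have hsq : ε ^ 2 ≤ 1 := (sq_le_one_iff_abs_le_one ε).2 hε
  have hbet : ∀ a : ℝ,
      MemLp ((1 / 4 : ℝ) • expProcess ((1 + ε ^ 2 / 16) / 2) (a • Y) n) ⊤ μ := fun a =>
    (memLp_top_expProcess (hY.const_smul a) (by positivity) (ae_abs_smul_le hle a) n).const_smul _
  rw [congrFun (payoff_eq_expProcess ε Y) n]
  exact ((memLp_top_expProcess hY (by linarith) hle n).sub (hbet (1 + ε))).sub (hbet (1 - ε))

theorem ae_frequently_frequently_lt_sum {Y : ℕ → ℕ → Ω → ℝ} (hY : ∀ k, IsMartingaleDiff (Y k) ℱ μ)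
    {ε : ℝ} (hε₀ : 0 < ε) (hε₁ : ε ≤ 1 / 4) (hle : ∀ k n, ∀ᵐ ω ∂μ, |Y k n ω| ≤ ε ^ 2 / 128)
    {A : ℕ → ℕ → Set Ω} (hA : ∀ k n, MeasurableSet[ℱ n] (A k n))
    (hdisj : ∀ n, Pairwise fun j k => Disjoint (A j n) (A k n))
    (hzero : ∀ k n, ∀ ω ∉ A k n, Y k n ω = 0)
    (hquad : ∀ k n, ∀ᵐ ω ∂μ, (1 / 2 + 2 * ε) * quadVar (Y k · ω) n ≤ Real.log (k + 1) + 1) :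
    ∀ᵐ ω ∂μ, ∃ᶠ k in atTop, ∃ᶠ n in atTop, 4 * Real.log 4 ≤ ε ^ 2 * quadVar (Y k · ω) n →
      (1 - ε) * quadVar (Y k · ω) n < ∑ i ∈ Finset.range n, Y k i ω := by
  have hε : |ε| ≤ 1 := abs_le.2 ⟨by linarith, by linarith⟩
  set C : ℝ := Real.exp (Real.log 4 / ε) * Real.exp 1
  have hbound : ∀ k n, ∀ᵐ ω ∂μ,
      payoff ε (∑ i ∈ Finset.range n, Y k i ω) (quadVar (Y k · ω) n) ≤ C * (k + 1) := fun k n => by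
    filter_upwards [hquad k n] with ω hω
    refine (payoff_le hε₀ hε₁ (quadVar_nonneg _ n)).trans ?_
    rw [mul_assoc]
    refine mul_le_mul_of_nonneg_left ((Real.exp_le_exp.2 hω).trans_eq ?_) (Real.exp_pos _).le
    rw [Real.exp_add, Real.exp_log (by positivity), mul_comm]
  have hsum : ¬ Summable fun k : ℕ => 1 / 2 / (C * ((k : ℝ) + 1)) := by
    have h := mt (summable_nat_add_iff 1).1 Real.not_summable_one_div_natCast
    have hC : 1 / 2 / C ≠ 0 := by positivity
    simpa [div_mul_eq_div_div, div_eq_mul_inv, mul_assoc, mul_comm, mul_left_comm, hC] using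
      (summable_mul_left_iff hC).not.2 h
  filter_upwards [ae_frequently_frequently_pos_of_submartingale
    (fun k => submartingale_payoff (hY k) hε (hle k))
    (fun k n => memLp_top_payoff (hY k) hε (hle k) n) (a := 1 / 2) (by norm_num)
    (fun k ω => by norm_num [payoff, quadVar]) (fun k => by positivity) hbound hA hdisj
    (fun k n ω hω => by simp [quadVar_succ, Finset.sum_range_succ, hzero k n ω hω]) hsum]
    with ω hω
  exact hω.mono fun k hk => hk.mono fun n hn hlarge => lt_of_payoff_pos hε₀ (by linarith) hlarge hn

end PayoffProcess

section Normalization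

/-- `log log √T`, that is, the iterated logarithm of `V` in terms of `T = V ^ 2`. -/
noncomputable def ell (T : ℝ) : ℝ := Real.log (Real.log √T)

/-- The normalization `V * √(log log V)` of the partial sums, in terms of `T = V ^ 2`. -/
noncomputable def lilNorm (T : ℝ) : ℝ := √T * √(ell T)

lemma log_sqrt_pos {T : ℝ} (hT : 1 < T) : 0 < Real.log √T :=
  Real.log_pos (Real.lt_sqrt_of_sq_lt (by simpa using hT))

lemma ell_le_ell {s t : ℝ} (hs : 1 < s) (hst : s ≤ t) : ell s ≤ ell t :=
  Real.log_le_log (log_sqrt_pos hs)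
    (Real.log_le_log (Real.sqrt_pos.2 (one_pos.trans hs)) (Real.sqrt_le_sqrt hst))

lemma tendsto_ell_atTop : Tendsto ell atTop atTop :=
  Real.tendsto_log_atTop.comp (Real.tendsto_log_atTop.comp Real.tendsto_sqrt_atTop)

lemma ell_le_sqrt {T : ℝ} (hT : 1 < T) : ell T ≤ √T :=
  (Real.log_le_self (log_sqrt_pos hT).le).trans (Real.log_le_self (Real.sqrt_nonneg T))

lemma ell_sqrt {T : ℝ} (hT : 1 < T) : ell √T = ell T - Real.log 2 := by
  rw [ell, ell, Real.log_sqrt (Real.sqrt_nonneg _), Real.log_div (log_sqrt_pos hT).ne' two_ne_zero]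

lemma ell_pow {R : ℝ} (hR : 1 < R) {k : ℕ} (hk : k ≠ 0) :
    ell (R ^ k) = Real.log k + Real.log (Real.log R / 2) := by
  have hlogR : 0 < Real.log R := Real.log_pos hR
  rw [ell, Real.log_sqrt (by positivity), Real.log_pow, mul_div_assoc,
    Real.log_mul (Nat.cast_ne_zero.2 hk) (by positivity)]

lemma tendsto_log_natCast_atTop : Tendsto (fun k : ℕ => Real.log k) atTop atTop :=
  Real.tendsto_log_atTop.comp tendsto_natCast_atTop_atTop

lemma tendsto_log_natCast_add_one_atTop :
    Tendsto (fun k : ℕ => Real.log ((k : ℝ) + 1)) atTop atTop :=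
  Real.tendsto_log_atTop.comp (tendsto_atTop_add_const_right _ _ tendsto_natCast_atTop_atTop)

lemma eventually_log_succ_le_ell_pow {R δ : ℝ} (hR : 1 < R) (hδ : 0 < δ) :
    ∀ᶠ k : ℕ in atTop, Real.log ((k : ℝ) + 1) ≤ (1 + δ) * ell (R ^ k) := by
  filter_upwards [eventually_ge_atTop 1, tendsto_log_natCast_atTop.eventually_ge_atTop
    ((Real.log 2 - (1 + δ) * Real.log (Real.log R / 2)) / δ)] with k hk hlog
  have hk' : (1 : ℝ) ≤ k := by exact_mod_cast hk
  have hsucc : Real.log ((k : ℝ) + 1) ≤ Real.log 2 + Real.log k := by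
    rw [← Real.log_mul two_ne_zero (by positivity)]
    exact Real.log_le_log (by positivity) (by linarith)
  rw [ell_pow hR (by lia)]
  rw [div_le_iff₀ hδ] at hlog
  linarith

lemma eventually_ell_two_mul_pow_succ_le {R ε : ℝ} (hR : 1 < R) (hε : 0 < ε) :
    ∀ᶠ k : ℕ in atTop, ell (2 * R ^ (k + 1)) ≤ (1 + ε) * Real.log ((k : ℝ) + 1) := by
  filter_upwards [tendsto_log_natCast_add_one_atTop.eventually_ge_atTop
    (Real.log (Real.log (2 * R) / 2) / ε)] with k hlog
  have hpow : 1 < R ^ (k + 1) := one_lt_pow₀ hR (by lia)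
  have hle : 2 * R ^ (k + 1) ≤ (2 * R) ^ (k + 1) := by
    rw [mul_pow]
    gcongr
    exact le_self_pow₀ one_le_two (by lia)
  refine (ell_le_ell (by linarith) hle).trans ?_
  rw [ell_pow (by linarith) (by lia)]
  push_cast
  rw [div_le_iff₀ hε] at hlog
  linarith

/-- The iterated logarithm varies so slowly that even `s = √T` satisfies `ell T ≤ 2 * ell s`, while
`ell T ≤ √T` disposes of smaller `s`. -/
lemma mul_ell_le_of_le_two_mul {s T : ℝ} (hT : 1 < T) (hellT : 2 * Real.log 2 ≤ ell T)
    (hells : 1 ≤ ell s) (hsT : s ≤ 2 * T) : s * ell T ≤ 4 * T * ell s := by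
  have hlog2 : 0 < Real.log 2 := Real.log_pos one_lt_two
  have hell0 : 0 ≤ ell T := by linarith
  rcases le_total (√T) s with hle | hle
  · have hell := ell_le_ell (Real.lt_sqrt_of_sq_lt (by simpa using hT)) hle
    rw [ell_sqrt hT] at hell
    calc s * ell T ≤ 2 * T * (2 * ell s) := by gcongr; linarith
      _ = 4 * T * ell s := by ring
  · calc s * ell T ≤ √T * √T := by gcongr; exact ell_le_sqrt hT
      _ = T := Real.mul_self_sqrt (by linarith)
      _ ≤ 4 * T * ell s := by nlinarith

lemma lilNorm_nonneg (T : ℝ) : 0 ≤ lilNorm T := by unfold lilNorm; positivity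

lemma lilNorm_pos {T : ℝ} (hT : 0 < T) (hell : 0 < ell T) : 0 < lilNorm T :=
  mul_pos (Real.sqrt_pos.2 hT) (Real.sqrt_pos.2 hell)

lemma lilNorm_sq {T : ℝ} (hT : 0 ≤ T) (hell : 0 ≤ ell T) : lilNorm T ^ 2 = T * ell T := by
  rw [lilNorm, mul_pow, Real.sq_sqrt hT, Real.sq_sqrt hell]

lemma lilNorm_sq_le {c T : ℝ} (hT : 0 ≤ T) (hc : 0 ≤ c) (hell : ell T ≤ c) :
    lilNorm T ^ 2 ≤ T * c := by
  rw [lilNorm, mul_pow, Real.sq_sqrt hT]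
  gcongr
  exact (pow_le_pow_left₀ (Real.sqrt_nonneg _) (Real.sqrt_le_sqrt hell) 2).trans_eq
    (Real.sq_sqrt hc)

lemma lilNorm_le_mul_lilNorm {c s t : ℝ} (hc : 0 ≤ c) (hs : 1 < s) (hst : s ≤ t)
    (hsc : s ≤ c ^ 2 * t) : lilNorm s ≤ c * lilNorm t := by
  have hsqrt : √s ≤ c * √t := by
    rw [← Real.sqrt_sq hc, ← Real.sqrt_mul (sq_nonneg c)]
    exact Real.sqrt_le_sqrt hsc
  rw [lilNorm, lilNorm, ← mul_assoc]
  gcongr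
  exact ell_le_ell hs hst

/-- The scale `λ` with `λ ^ 2 * R ^ (k + 1) = 2 * log (k + 1)`: it optimizes the exponential bounds
for the partial sums while the quadratic variation is of order `R ^ (k + 1)`. -/
noncomputable def blockScale (R : ℝ) (k : ℕ) : ℝ := √(2 * Real.log ((k : ℝ) + 1) / R ^ (k + 1))

lemma blockScale_nonneg (R : ℝ) (k : ℕ) : 0 ≤ blockScale R k := Real.sqrt_nonneg _

lemma blockScale_sq_mul {R : ℝ} (hR : 0 < R) (k : ℕ) :
    blockScale R k ^ 2 * R ^ (k + 1) = 2 * Real.log ((k : ℝ) + 1) := by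
  have hlog : 0 ≤ Real.log ((k : ℝ) + 1) := Real.log_nonneg (by linarith [k.cast_nonneg (α := ℝ)])
  rw [blockScale, Real.sq_sqrt (by positivity)]
  field_simp

lemma blockScale_pos {R : ℝ} (hR : 0 < R) {k : ℕ} (hk : 0 < k) : 0 < blockScale R k := by
  have hlog : 0 < Real.log ((k : ℝ) + 1) := Real.log_pos (by simpa using hk)
  unfold blockScale
  positivity

end Normalization

section Pathwise

lemma exists_forall_lt_iff_lt_of_monotone {α : Type*} [LinearOrder α] {f : ℕ → α}
    (hf : Monotone f) {c : α} (hc : ∃ n, c ≤ f n) : ∃ n, ∀ i, i < n ↔ f i < c := by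
  classical
  refine ⟨Nat.find hc, fun i => ⟨fun hi => not_le.1 (Nat.find_min hc hi), fun hi => ?_⟩⟩
  by_contra! hn
  exact (((Nat.find_spec hc).trans (hf hn)).trans_lt hi).false

lemma eventually_exists_pow_le_and_lt_pow_succ {R : ℝ} (hR : 1 < R) {p : ℕ → Prop}
    (hp : ∀ᶠ k in atTop, p k) : ∀ᶠ t in atTop, ∃ k, p k ∧ R ^ k ≤ t ∧ t < R ^ (k + 1) := by
  obtain ⟨K, hK⟩ := eventually_atTop.1 hp
  filter_upwards [eventually_ge_atTop (R ^ K)] with t ht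
  obtain ⟨k, hle, hlt⟩ := exists_nat_pow_near ((one_le_pow₀ hR.le).trans ht) hR
  have hKk : K < k + 1 := (pow_lt_pow_iff_right₀ hR).1 (ht.trans_lt hlt)
  exact ⟨k, hK k (by lia), hle, hlt⟩

lemma sum_range_ite_eq_sub {E : Type*} [AddCommGroup E] (f : ℕ → E) {a b n : ℕ} (hab : a ≤ b)
    (hbn : b ≤ n) :
    ∑ i ∈ Finset.range n, (if a ≤ i ∧ i < b then f i else 0) =
      ∑ i ∈ Finset.range b, f i - ∑ i ∈ Finset.range a, f i := by
  rw [← Finset.sum_filter, ← Finset.sum_Ico_eq_sub f hab]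
  congr 1
  ext i
  simp only [Finset.mem_filter, Finset.mem_range, Finset.mem_Ico]
  lia

lemma quadVar_le_of_eq_zero {x y : ℕ → ℝ} {a b c : ℝ} (ha : 0 ≤ a) (hb : 0 ≤ b) (hc : 0 ≤ c)
    (hyx : ∀ i, y i ^ 2 ≤ c * x i ^ 2) (hyb : ∀ i, y i ^ 2 ≤ b)
    (hzero : ∀ i, a ≤ quadVar x i → y i = 0) (n : ℕ) : quadVar y n ≤ c * a + b := by
  induction n with
  | zero => simpa [quadVar] using add_nonneg (mul_nonneg hc ha) hb
  | succ n ih =>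
    rw [quadVar_succ]
    rcases lt_or_ge (quadVar x n) a with hn | hn
    · have hle : quadVar y n ≤ c * quadVar x n := by
        rw [quadVar, quadVar, Finset.mul_sum]
        exact Finset.sum_le_sum fun i _ => hyx i
      linarith [hyb n, mul_le_mul_of_nonneg_left hn.le hc]
    · simpa [hzero n hn] using ih

/-- The pathwise hypotheses of the law: the increments `x n` are dominated by bounds `m n`, which
are `o(V / √(log log V))` for `V` the root of the quadratic variation, and `V` tends to infinity. -/
structure KolmogorovCondition (x m : ℕ → ℝ) : Prop where
  abs_le : ∀ n, |x n| ≤ m n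
  tendsto_sqrt_quadVar : Tendsto (fun n => √(quadVar x n)) atTop atTop
  tendsto_ratio : Tendsto
    (fun n => m n / (√(quadVar x (n + 1)) / √(ell (quadVar x (n + 1))))) atTop (nhds 0)

namespace KolmogorovCondition

variable {x m : ℕ → ℝ}

lemma nonneg (h : KolmogorovCondition x m) (n : ℕ) : 0 ≤ m n := (abs_nonneg _).trans (h.abs_le n)

lemma sq_le (h : KolmogorovCondition x m) (n : ℕ) : x n ^ 2 ≤ m n ^ 2 :=
  sq_le_sq.2 ((h.abs_le n).trans (le_abs_self _))

lemma tendsto_quadVar (h : KolmogorovCondition x m) : Tendsto (quadVar x) atTop atTop := by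
  simpa only [Function.comp_def, Real.sq_sqrt (quadVar_nonneg x _)] using
    (tendsto_pow_atTop two_ne_zero).comp h.tendsto_sqrt_quadVar

lemma tendsto_quadVar_succ (h : KolmogorovCondition x m) :
    Tendsto (fun n => quadVar x (n + 1)) atTop atTop :=
  h.tendsto_quadVar.comp (tendsto_add_atTop_nat 1)

lemma neg (h : KolmogorovCondition x m) : KolmogorovCondition (-x) m := by
  have hquad : quadVar (-x) = quadVar x := by ext n; simp [quadVar]
  exact ⟨fun n => by simpa using h.abs_le n, hquad ▸ h.tendsto_sqrt_quadVar,
    hquad ▸ h.tendsto_ratio⟩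

lemma eventually_lilNorm_pos (h : KolmogorovCondition x m) :
    ∀ᶠ n in atTop, 0 < lilNorm (quadVar x n) := by
  filter_upwards [h.tendsto_quadVar.eventually_gt_atTop 0,
    (tendsto_ell_atTop.comp h.tendsto_quadVar).eventually_gt_atTop 0] with n hquad hell
  exact lilNorm_pos hquad hell

lemma eventually_sq_mul_ell_succ_le (h : KolmogorovCondition x m) {c : ℝ} (hc : 0 < c) :
    ∀ᶠ n in atTop, m n ^ 2 * ell (quadVar x (n + 1)) ≤ c * quadVar x (n + 1) := by
  filter_upwards [h.tendsto_ratio.eventually_lt_const (Real.sqrt_pos.2 hc),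
    (tendsto_ell_atTop.comp h.tendsto_quadVar_succ).eventually_gt_atTop 0,
    h.tendsto_quadVar_succ.eventually_gt_atTop 0] with n hratio hell hquad
  have hell : 0 < ell (quadVar x (n + 1)) := hell
  have hsell := Real.sqrt_pos.2 hell
  rw [div_lt_iff₀ (by positivity), mul_div_assoc', lt_div_iff₀ hsell] at hratio
  have hsq := pow_le_pow_left₀ (mul_nonneg (h.nonneg n) hsell.le) hratio.le 2
  rwa [mul_pow, mul_pow, Real.sq_sqrt hell.le, Real.sq_sqrt hquad.le, Real.sq_sqrt hc.le] at hsq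

lemma eventually_quadVar_succ_le (h : KolmogorovCondition x m) :
    ∀ᶠ n in atTop, quadVar x (n + 1) ≤ 2 * quadVar x n := by
  filter_upwards [h.eventually_sq_mul_ell_succ_le one_half_pos,
    (tendsto_ell_atTop.comp h.tendsto_quadVar_succ).eventually_ge_atTop 1] with n hsq hell
  have hm : m n ^ 2 ≤ m n ^ 2 * ell (quadVar x (n + 1)) := le_mul_of_one_le_right (sq_nonneg _) hell
  linarith [quadVar_succ x n, h.sq_le n]

lemma eventually_forall_sq_mul_ell_le (h : KolmogorovCondition x m) {c : ℝ} (hc : 0 < c) :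
    ∀ᶠ T in atTop, ∀ i, quadVar x i ≤ T → m i ^ 2 * ell T ≤ c * T := by
  obtain ⟨N, hN⟩ := eventually_atTop.1 ((h.eventually_sq_mul_ell_succ_le
    (show 0 < c / 4 by positivity)).and (h.eventually_quadVar_succ_le.and
    ((tendsto_ell_atTop.comp h.tendsto_quadVar_succ).eventually_ge_atTop 1)))
  filter_upwards [eventually_gt_atTop 1, tendsto_ell_atTop.eventually_ge_atTop (2 * Real.log 2),
    Real.tendsto_sqrt_atTop.eventually_ge_atTop ((∑ i ∈ Finset.range N, m i ^ 2) / c)]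
    with T hT hellT hsqrtT i hi
  have hell0 : 0 ≤ ell T := hellT.trans' (by positivity)
  rcases lt_or_ge i N with hiN | hNi
  · have hm : m i ^ 2 ≤ ∑ i ∈ Finset.range N, m i ^ 2 :=
      Finset.single_le_sum (f := fun i => m i ^ 2) (fun _ _ => sq_nonneg _)
        (Finset.mem_range.2 hiN)
    calc m i ^ 2 * ell T ≤ √T * c * √T := by
          gcongr
          exacts [hm.trans ((div_le_iff₀ hc).1 hsqrtT), ell_le_sqrt hT]
      _ = c * T := by rw [mul_right_comm, Real.mul_self_sqrt (by linarith), mul_comm]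
  · obtain ⟨hm, hdouble, hells⟩ := hN i hNi
    have hells : 1 ≤ ell (quadVar x (i + 1)) := hells
    have hslow := mul_ell_le_of_le_two_mul hT hellT hells (by linarith)
    refine le_of_mul_le_mul_right ?_ (one_pos.trans_le hells)
    calc m i ^ 2 * ell T * ell (quadVar x (i + 1))
        = m i ^ 2 * ell (quadVar x (i + 1)) * ell T := by ring
      _ ≤ c / 4 * quadVar x (i + 1) * ell T := by gcongr
      _ = c / 4 * (quadVar x (i + 1) * ell T) := by ring
      _ ≤ c / 4 * (4 * T * ell (quadVar x (i + 1))) := by gcongr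
      _ = c * T * ell (quadVar x (i + 1)) := by ring

lemma eventually_forall_blockScale_mul_le (h : KolmogorovCondition x m) {R ρ : ℝ} (hR : 1 < R)
    (hρ : 0 < ρ) :
    ∀ᶠ k : ℕ in atTop, ∀ i, quadVar x i ≤ R ^ (k + 1) → blockScale R k * m i ≤ ρ := by
  have hpow : Tendsto (fun k : ℕ => R ^ (k + 1)) atTop atTop :=
    (tendsto_pow_atTop_atTop_of_one_lt hR).comp (tendsto_add_atTop_nat 1)
  filter_upwards [hpow.eventually
      (h.eventually_forall_sq_mul_ell_le (show 0 < ρ ^ 2 / 4 by positivity)),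
    (tendsto_add_atTop_nat 1).eventually (eventually_log_succ_le_ell_pow hR one_pos)]
    with k hm hlog i hi
  have hlog' : Real.log ((k : ℝ) + 1) ≤ 2 * ell (R ^ (k + 1)) := by
    refine (Real.log_le_log (by positivity) ?_).trans (hlog.trans_eq (by norm_num))
    push_cast
    linarith
  refine le_of_sq_le_sq (le_of_mul_le_mul_right ?_ (show 0 < R ^ (k + 1) by positivity)) hρ.le
  calc (blockScale R k * m i) ^ 2 * R ^ (k + 1)
      = m i ^ 2 * (blockScale R k ^ 2 * R ^ (k + 1)) := by ring
    _ ≤ m i ^ 2 * (2 * (2 * ell (R ^ (k + 1)))) := by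
        rw [blockScale_sq_mul (by positivity)]
        gcongr
    _ = 4 * (m i ^ 2 * ell (R ^ (k + 1))) := by ring
    _ ≤ 4 * (ρ ^ 2 / 4 * R ^ (k + 1)) := by linarith [hm i hi]
    _ = ρ ^ 2 * R ^ (k + 1) := by ring

lemma eventually_exists_crossing (h : KolmogorovCondition x m) (N : ℕ) :
    ∀ᶠ c in atTop, ∃ n, N ≤ n ∧ (∀ i, i < n ↔ quadVar x i < c) ∧
      c ≤ quadVar x n ∧ quadVar x n ≤ 2 * c := by
  obtain ⟨K, hK⟩ := eventually_atTop.1 h.eventually_quadVar_succ_le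
  filter_upwards [eventually_gt_atTop (quadVar x (max N K))] with c hc
  obtain ⟨n, hn⟩ := exists_forall_lt_iff_lt_of_monotone (quadVar_mono x)
    (h.tendsto_quadVar.eventually_ge_atTop c).exists
  have hlt : max N K < n := (hn _).2 hc
  obtain ⟨j, rfl⟩ : ∃ j, n = j + 1 := ⟨n - 1, by lia⟩
  have hj : quadVar x j < c := (hn j).1 (by lia)
  exact ⟨j + 1, by lia, hn, not_lt.1 fun hlt => ((hn _).2 hlt).false,
    (hK j (by lia)).trans (by linarith)⟩

lemma eventually_exists_block (h : KolmogorovCondition x m) {R : ℝ} (hR : 1 < R) (N : ℕ) :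
    ∀ᶠ k : ℕ in atTop, ∃ a b, N ≤ a ∧ a ≤ b ∧
      (∀ i, i < a ↔ quadVar x i < R ^ k) ∧ (∀ i, i < b ↔ quadVar x i < R ^ (k + 1)) ∧
      quadVar x a ∈ Set.Icc (R ^ k) (2 * R ^ k) ∧
      quadVar x b ∈ Set.Icc (R ^ (k + 1)) (2 * R ^ (k + 1)) := by
  have hcross := (tendsto_pow_atTop_atTop_of_one_lt hR).eventually (h.eventually_exists_crossing N)
  filter_upwards [hcross, (tendsto_add_atTop_nat 1).eventually hcross]
    with k ⟨a, hNa, ha, hqa⟩ ⟨b, _, hb, hqb⟩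
  refine ⟨a, b, hNa, ?_, ha, hb, hqa, hqb⟩
  by_contra! hba
  exact (hqb.1.trans_lt ((ha b).1 hba)).not_ge (pow_le_pow_right₀ hR.le k.le_succ)

end KolmogorovCondition

end Pathwise

section UpperBound

lemma le_sqrt_two_mul_lilNorm {l g R T q s : ℝ} (hl : 0 < l) (hT : 0 < T) (hR : 0 < R)
    (hlT : l ^ 2 * T = 2 * g) (hqT : q ≤ T) (hTq : T ≤ R * q) (hgq : g ≤ R * ell q)
    (hs : l * s - R / 2 * (l ^ 2 * q) ≤ R * g) : s ≤ √2 * R ^ 2 * lilNorm q := by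
  have hq : 0 ≤ q := (pos_of_mul_pos_right (hT.trans_le hTq) hR.le).le
  have hg : 0 < g := by nlinarith [mul_pos (pow_pos hl 2) hT]
  have hell : 0 ≤ ell q := (pos_of_mul_pos_right (hg.trans_le hgq) hR.le).le
  have hsl : s ≤ R * (l * T) := by
    refine le_of_mul_le_mul_left ?_ hl
    have hle : R / 2 * (l ^ 2 * q) ≤ R / 2 * (l ^ 2 * T) := by gcongr
    rw [hlT] at hle
    calc l * s ≤ R * (2 * g) := by linarith
      _ = l * (R * (l * T)) := by rw [← hlT]; ring
  have hlT' : l * T ≤ √2 * R * lilNorm q := by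
    refine le_of_sq_le_sq ?_ (by have := lilNorm_nonneg q; positivity)
    calc (l * T) ^ 2 = 2 * g * T := by rw [← hlT]; ring
      _ ≤ 2 * (R * ell q) * (R * q) := by gcongr
      _ = (√2 * R * lilNorm q) ^ 2 := by
        rw [mul_pow, mul_pow, Real.sq_sqrt zero_le_two, lilNorm_sq hq hell]
        ring
  calc s ≤ R * (√2 * R * lilNorm q) := hsl.trans (by gcongr)
    _ = √2 * R ^ 2 * lilNorm q := by ring

lemma KolmogorovCondition.eventually_sum_le {x m : ℕ → ℝ} (h : KolmogorovCondition x m) {δ : ℝ}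
    (hδ : 0 < δ) (hev : ∀ᶠ k : ℕ in atTop, ∀ n,
      (∀ i < n, blockScale (1 + δ) k * m i ≤ δ / 4) →
      blockScale (1 + δ) k * ∑ i ∈ Finset.range n, x i -
        (1 + δ) / 2 * (blockScale (1 + δ) k ^ 2 * quadVar x n) ≤
          (1 + δ) * Real.log ((k : ℝ) + 1)) :
    ∀ᶠ n in atTop, ∑ i ∈ Finset.range n, x i ≤ √2 * (1 + δ) ^ 2 * lilNorm (quadVar x n) := by
  have hR : 1 < 1 + δ := by linarith
  have hblock := hev.and ((h.eventually_forall_blockScale_mul_le hR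
    (show 0 < δ / 4 by positivity)).and
    ((eventually_log_succ_le_ell_pow hR hδ).and (eventually_gt_atTop 0)))
  filter_upwards [h.tendsto_quadVar.eventually
    (eventually_exists_pow_le_and_lt_pow_succ hR hblock)] with n hn
  obtain ⟨k, ⟨hsum, hm, hlog, hk⟩, hle, hlt⟩ := hn
  have hpow : 1 < (1 + δ) ^ k := one_lt_pow₀ hR hk.ne'
  refine le_sqrt_two_mul_lilNorm (blockScale_pos (by linarith) hk) (by positivity) (by linarith)
    (blockScale_sq_mul (by linarith) k) hlt.le ?_ (hlog.trans ?_)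
    (hsum n fun i hi => hm i ((quadVar_mono x hi.le).trans hlt.le))
  · rw [pow_succ']
    gcongr
  · gcongr
    exact ell_le_ell hpow hle

lemma abs_indicator_smul_le {Ω : Type*} {A : Set Ω} {f g : Ω → ℝ} {c ρ : ℝ} {ω : Ω} (hc : 0 ≤ c)
    (hρ : 0 ≤ ρ) (hfg : |f ω| ≤ g ω) (hA : ω ∈ A → c * g ω ≤ ρ) :
    |A.indicator (c • f) ω| ≤ ρ := by
  by_cases hω : ω ∈ A
  · rw [Set.indicator_of_mem hω, Pi.smul_apply, smul_eq_mul, abs_mul, abs_of_nonneg hc]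
    exact (mul_le_mul_of_nonneg_left hfg hc).trans (hA hω)
  · rwa [Set.indicator_of_notMem hω, abs_zero]

variable {Ω : Type*} {mΩ : MeasurableSpace Ω} {μ : Measure Ω} [IsFiniteMeasure μ]
  {ℱ : Filtration ℕ mΩ} {X M : ℕ → Ω → ℝ}

theorem ae_eventually_sum_le (hX : IsMartingaleDiff X ℱ μ)
    (hM : ∀ n, StronglyMeasurable[ℱ n] (M n))
    (hXM : ∀ᵐ ω ∂μ, KolmogorovCondition (X · ω) (M · ω)) {δ : ℝ} (hδ₀ : 0 < δ) (hδ₁ : δ ≤ 1) :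
    ∀ᵐ ω ∂μ, ∀ᶠ n in atTop,
      ∑ i ∈ Finset.range n, X i ω ≤ √2 * (1 + δ) ^ 2 * lilNorm (quadVar (X · ω) n) := by
  let A (k n : ℕ) : Set Ω := {ω | blockScale (1 + δ) k * M n ω ≤ δ / 4}
  let Y (k n : ℕ) : Ω → ℝ := (A k n).indicator (blockScale (1 + δ) k • X n)
  have hA (k n : ℕ) : MeasurableSet[ℱ n] (A k n) :=
    measurableSet_le ((hM n).measurable.const_mul _) measurable_const
  have hY (k : ℕ) : IsMartingaleDiff (Y k) ℱ μ := (hX.const_smul _).indicator (hA k)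
  have hle (k n : ℕ) : ∀ᵐ ω ∂μ, |Y k n ω| ≤ δ / 4 := by
    filter_upwards [hXM] with ω hω
    exact abs_indicator_smul_le (blockScale_nonneg _ _) (by positivity) (hω.abs_le n) id
  filter_upwards [hXM, ae_eventually_sum_sub_quadVar_lt hY hδ₀ hδ₁ hle] with ω hω hev
  refine hω.eventually_sum_le hδ₀ (hev.mono fun k hk n hn => ?_)
  have hYX (i : ℕ) (hi : i ∈ Finset.range n) : Y k i ω = blockScale (1 + δ) k * X i ω :=
    Set.indicator_of_mem (s := A k i) (hn i (Finset.mem_range.1 hi)) _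
  have hsum : ∑ i ∈ Finset.range n, Y k i ω =
      blockScale (1 + δ) k * ∑ i ∈ Finset.range n, X i ω := by
    rw [Finset.sum_congr rfl hYX, Finset.mul_sum]
  have hquad : quadVar (Y k · ω) n = blockScale (1 + δ) k ^ 2 * quadVar (X · ω) n := by
    rw [← quadVar_const_mul]
    exact Finset.sum_congr rfl fun i hi => congrArg (· ^ 2) (hYX i hi)
  exact hsum ▸ hquad ▸ (hk n).le

end UpperBound

section LowerBound

lemma sqrt_two_mul_lilNorm_le_sub {ε l g T q₁ q₂ s₁ s₂ : ℝ} (hε₀ : 0 < ε) (hε₁ : ε ≤ 1 / 4)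
    (hl : 0 < l) (hT : 0 < T) (hlT : l ^ 2 * T = 2 * g) (hTq₂ : T ≤ q₂)
    (hell : ell q₂ ≤ (1 + ε) * g) (hq₁ : q₁ ≤ 2 * ε ^ 2 * T)
    (hs : (1 - ε) * ((1 - 2 * ε) * l * (q₂ - q₁)) ≤ s₂ - s₁) :
    √2 * (1 - 5 * ε) * lilNorm q₂ ≤ s₂ - s₁ := by
  have hε₂ : 0 ≤ 1 - 2 * ε ^ 2 := by nlinarith
  have hq₂ : 0 < q₂ := hT.trans_le hTq₂
  have hg : 0 < g := by nlinarith [mul_pos (pow_pos hl 2) hT]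
  have hq : (1 - 2 * ε ^ 2) * q₂ ≤ q₂ - q₁ := by nlinarith [sq_nonneg ε]
  have hlq₂ : √2 * ((1 - ε) * lilNorm q₂) ≤ l * q₂ := by
    refine le_of_sq_le_sq ?_ (by positivity)
    calc (√2 * ((1 - ε) * lilNorm q₂)) ^ 2 = 2 * (1 - ε) ^ 2 * lilNorm q₂ ^ 2 := by
          rw [mul_pow, mul_pow, Real.sq_sqrt zero_le_two, mul_assoc]
      _ ≤ 2 * (1 - ε) ^ 2 * (q₂ * ((1 + ε) * g)) := by
          gcongr
          exact lilNorm_sq_le hq₂.le (by positivity) hell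
      _ = (1 - ε) ^ 2 * (1 + ε) * (2 * g) * q₂ := by ring
      _ ≤ 1 * (2 * g) * q₂ := by gcongr; nlinarith [sq_nonneg ε]
      _ = l ^ 2 * T * q₂ := by rw [hlT, one_mul]
      _ ≤ l ^ 2 * q₂ * q₂ := by gcongr
      _ = (l * q₂) ^ 2 := by ring
  have hcoef : 1 - 5 * ε ≤ (1 - ε) ^ 2 * ((1 - 2 * ε) * (1 - 2 * ε ^ 2)) := by
    nlinarith [sq_nonneg ε, pow_pos hε₀ 3, mul_nonneg (sq_nonneg ε) (sub_nonneg.2 hε₁)]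
  have hε₃ : 0 ≤ 1 - ε := by linarith
  have hε₄ : 0 ≤ 1 - 2 * ε := by linarith
  have hnorm := lilNorm_nonneg q₂
  calc √2 * (1 - 5 * ε) * lilNorm q₂
      ≤ √2 * ((1 - ε) ^ 2 * ((1 - 2 * ε) * (1 - 2 * ε ^ 2))) * lilNorm q₂ := by gcongr
    _ = (1 - ε) * ((1 - 2 * ε) * (1 - 2 * ε ^ 2)) * (√2 * ((1 - ε) * lilNorm q₂)) := by ring
    _ ≤ (1 - ε) * ((1 - 2 * ε) * (1 - 2 * ε ^ 2)) * (l * q₂) := by gcongr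
    _ = (1 - ε) * ((1 - 2 * ε) * l * ((1 - 2 * ε ^ 2) * q₂)) := by ring
    _ ≤ (1 - ε) * ((1 - 2 * ε) * l * (q₂ - q₁)) := by gcongr
    _ ≤ s₂ - s₁ := hs

lemma four_mul_log_four_le {ε l g T q : ℝ} (hε₀ : 0 < ε) (hε₁ : ε ≤ 1 / 4)
    (hlT : l ^ 2 * T = 2 * g) (hg : 16 * Real.log 4 / ε ^ 2 ≤ g) (hq : T / 2 ≤ q) :
    4 * Real.log 4 ≤ ε ^ 2 * (((1 - 2 * ε) * l) ^ 2 * q) := by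
  have hcoef : (1 / 2) ^ 2 ≤ (1 - 2 * ε) ^ 2 := by gcongr; linarith
  have hlog : 0 ≤ Real.log 4 := Real.log_nonneg (by norm_num)
  have hg₀ : 0 ≤ g := hg.trans' (by positivity)
  rw [div_le_iff₀ (by positivity)] at hg
  calc 4 * Real.log 4 ≤ ε ^ 2 * ((1 / 2) ^ 2 * (l ^ 2 * T) / 2) := by rw [hlT]; linarith
    _ ≤ ε ^ 2 * ((1 - 2 * ε) ^ 2 * (l ^ 2 * T) / 2) := by rw [hlT]; gcongr
    _ = ε ^ 2 * (((1 - 2 * ε) * l) ^ 2 * (T / 2)) := by ring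
    _ ≤ ε ^ 2 * (((1 - 2 * ε) * l) ^ 2 * q) := by gcongr

lemma KolmogorovCondition.frequently_le_sum {x m : ℕ → ℝ} (h : KolmogorovCondition x m)
    {ε R : ℝ} (hε₀ : 0 < ε) (hε₁ : ε ≤ 1 / 4) (hR : R * ε ^ 2 = 1)
    (hup : ∀ᶠ n in atTop, -∑ i ∈ Finset.range n, x i ≤ 2 * lilNorm (quadVar x n))
    (hfr : ∃ᶠ k : ℕ in atTop, ∀ a b, a ≤ b → (∀ i < b, blockScale R k * m i ≤ ε ^ 2 / 128) →
      (∀ i, i < a ↔ quadVar x i < R ^ k) → (∀ i, i < b ↔ quadVar x i < R ^ (k + 1)) →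
      4 * Real.log 4 ≤ ε ^ 2 * (((1 - 2 * ε) * blockScale R k) ^ 2 *
        (quadVar x b - quadVar x a)) →
      (1 - ε) * (((1 - 2 * ε) * blockScale R k) ^ 2 * (quadVar x b - quadVar x a)) <
        (1 - 2 * ε) * blockScale R k *
          (∑ i ∈ Finset.range b, x i - ∑ i ∈ Finset.range a, x i)) :
    ∃ᶠ n in atTop, √2 * (1 - 7 * ε) * lilNorm (quadVar x n) ≤ ∑ i ∈ Finset.range n, x i := by
  have hε₂ : ε ^ 2 ≤ 1 / 4 := by nlinarith
  have hR₁ : 1 < R := by nlinarith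
  obtain ⟨Nup, hNup⟩ := eventually_atTop.1 hup
  refine frequently_atTop.2 fun N => ?_
  obtain ⟨k, hfr, ⟨a, b, hNa, hab, ha, hb, hqa, hqb⟩, hm, hell, hg, hk⟩ :=
    (hfr.and_eventually ((h.eventually_exists_block hR₁ (max N Nup)).and
      ((h.eventually_forall_blockScale_mul_le hR₁ (show 0 < ε ^ 2 / 128 by positivity)).and
      ((eventually_ell_two_mul_pow_succ_le hR₁ hε₀).and
      ((tendsto_log_natCast_add_one_atTop.eventually_ge_atTop (16 * Real.log 4 / ε ^ 2)).and
      (eventually_gt_atTop 0)))))).exists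
  have hpow : R ^ k = ε ^ 2 * R ^ (k + 1) := by linear_combination -R ^ k * hR
  have hqa' : quadVar x a ≤ 2 * ε ^ 2 * R ^ (k + 1) := by linarith [hqa.2]
  have hscale := blockScale_sq_mul (one_pos.trans hR₁) k
  have hl : 0 < blockScale R k := blockScale_pos (one_pos.trans hR₁) hk
  have hqa₁ : 1 < quadVar x a := (one_lt_pow₀ hR₁ hk.ne').trans_le hqa.1
  have hqab : quadVar x a ≤ quadVar x b := quadVar_mono x hab
  have hincr := hfr a b hab (fun i hi => hm i ((hb i).1 hi).le) ha hb
    (four_mul_log_four_le hε₀ hε₁ hscale hg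
      (by nlinarith [hqb.1, pow_pos (one_pos.trans hR₁) (k + 1)]))
  have hdiff : √2 * (1 - 5 * ε) * lilNorm (quadVar x b) ≤
      ∑ i ∈ Finset.range b, x i - ∑ i ∈ Finset.range a, x i := by
    refine sqrt_two_mul_lilNorm_le_sub hε₀ hε₁ hl (by positivity) hscale hqb.1
      ((ell_le_ell (hqa₁.trans_le hqab) hqb.2).trans hell) hqa' ?_
    refine (lt_of_mul_lt_mul_left (a := (1 - 2 * ε) * blockScale R k) ?_ ?_).le
    · linarith
    · exact mul_nonneg (by linarith) hl.le
  have hprev : lilNorm (quadVar x a) ≤ √2 * ε * lilNorm (quadVar x b) := by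
    refine lilNorm_le_mul_lilNorm (by positivity) hqa₁ hqab ?_
    rw [mul_pow, Real.sq_sqrt zero_le_two]
    exact hqa'.trans (by gcongr; exact hqb.1)
  exact ⟨b, by lia, by linarith [hNup a (by lia)]⟩

section Block

variable {Ω : Type*} {X M : ℕ → Ω → ℝ} {ε R : ℝ}

/-- The event that the quadratic variation is in the `k`-th block `[R ^ k, R ^ (k + 1))` at time
`n` and the rescaled bound for the next increment is small. -/
def blockSet (X M : ℕ → Ω → ℝ) (ε R : ℝ) (k n : ℕ) : Set Ω :=
  {ω | blockScale R k * M n ω ≤ ε ^ 2 / 128 ∧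
    quadVar (X · ω) n ∈ Set.Ico (R ^ k) (R ^ (k + 1))}

/-- The rescaled increments of `X` in the `k`-th block. The factor `1 - 2 * ε` leaves room for the
correction terms of the exponential bounds. -/
noncomputable def blockDiff (X M : ℕ → Ω → ℝ) (ε R : ℝ) (k n : ℕ) : Ω → ℝ :=
  (blockSet X M ε R k n).indicator (((1 - 2 * ε) * blockScale R k) • X n)

lemma pairwise_disjoint_blockSet (hR : 1 ≤ R) (X M : ℕ → Ω → ℝ) (ε : ℝ) (n : ℕ) :
    Pairwise fun j k => Disjoint (blockSet X M ε R j n) (blockSet X M ε R k n) := by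
  intro j k hjk
  have hpow := (pow_right_mono₀ hR).pairwise_disjoint_on_Ico_succ hjk
  exact Set.disjoint_left.2 fun ω hj hk => Set.disjoint_left.1 hpow hj.2 hk.2

lemma abs_blockDiff_le (hε₀ : 0 ≤ ε) (hε₁ : ε ≤ 1 / 2) {ω : Ω}
    (h : KolmogorovCondition (X · ω) (M · ω)) (R : ℝ) (k n : ℕ) :
    |blockDiff X M ε R k n ω| ≤ ε ^ 2 / 128 := by
  refine abs_indicator_smul_le (mul_nonneg (by linarith) (blockScale_nonneg R k)) (by positivity)
    (h.abs_le n) fun hω => hω.1.trans' ?_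
  rw [mul_assoc]
  exact mul_le_of_le_one_left (mul_nonneg (blockScale_nonneg R k) (h.nonneg n)) (by linarith)

lemma blockDiff_sq_le (X M : ℕ → Ω → ℝ) (ε R : ℝ) (k n : ℕ) (ω : Ω) :
    blockDiff X M ε R k n ω ^ 2 ≤ ((1 - 2 * ε) * blockScale R k) ^ 2 * X n ω ^ 2 := by
  rw [← mul_pow, sq_le_sq]
  exact norm_indicator_le_norm_self (((1 - 2 * ε) * blockScale R k) • X n) ω

lemma quadVar_blockDiff_le (hε₀ : 0 ≤ ε) (hε₁ : ε ≤ 1 / 4) (hR : 0 < R) {ω : Ω}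
    (h : KolmogorovCondition (X · ω) (M · ω)) (k n : ℕ) :
    (1 / 2 + 2 * ε) * quadVar (blockDiff X M ε R k · ω) n ≤ Real.log ((k : ℝ) + 1) + 1 := by
  have hquad := quadVar_le_of_eq_zero (x := (X · ω)) (y := (blockDiff X M ε R k · ω))
    (pow_pos hR (k + 1)).le (sq_nonneg (ε ^ 2 / 128)) (sq_nonneg ((1 - 2 * ε) * blockScale R k))
    (fun i => blockDiff_sq_le X M ε R k i ω)
    (fun i => sq_le_sq.2 ((abs_blockDiff_le hε₀ (by linarith) h R k i).trans (le_abs_self _)))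
    (fun i hi => Set.indicator_of_notMem (fun hω => hω.2.2.not_ge hi) _) n
  rw [mul_pow, mul_assoc, blockScale_sq_mul hR] at hquad
  have hlog : 0 ≤ Real.log ((k : ℝ) + 1) := Real.log_nonneg (by linarith [k.cast_nonneg (α := ℝ)])
  have hcoef : (1 + 4 * ε) * (1 - 2 * ε) ^ 2 ≤ 1 := by nlinarith [pow_nonneg hε₀ 2]
  have hover : (1 / 2 + 2 * ε) * (ε ^ 2 / 128) ^ 2 ≤ 1 :=
    mul_le_one₀ (by linarith) (by positivity) (pow_le_one₀ (by positivity) (by nlinarith))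
  calc (1 / 2 + 2 * ε) * quadVar (blockDiff X M ε R k · ω) n
      ≤ (1 / 2 + 2 * ε) *
          ((1 - 2 * ε) ^ 2 * (2 * Real.log ((k : ℝ) + 1)) + (ε ^ 2 / 128) ^ 2) := by gcongr
    _ = (1 + 4 * ε) * (1 - 2 * ε) ^ 2 * Real.log ((k : ℝ) + 1) +
          (1 / 2 + 2 * ε) * (ε ^ 2 / 128) ^ 2 := by ring
    _ ≤ 1 * Real.log ((k : ℝ) + 1) + 1 := by gcongr
    _ = Real.log ((k : ℝ) + 1) + 1 := by rw [one_mul]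

variable {ω : Ω} {k a b n : ℕ}

lemma blockDiff_eq_ite (hM : ∀ i < b, blockScale R k * M i ω ≤ ε ^ 2 / 128)
    (ha : ∀ i, i < a ↔ quadVar (X · ω) i < R ^ k)
    (hb : ∀ i, i < b ↔ quadVar (X · ω) i < R ^ (k + 1)) (i : ℕ) :
    blockDiff X M ε R k i ω =
      if a ≤ i ∧ i < b then (1 - 2 * ε) * blockScale R k * X i ω else 0 := by
  have hmem : ω ∈ blockSet X M ε R k i ↔ a ≤ i ∧ i < b := by
    rw [← not_lt, ha, hb, not_lt]
    exact ⟨fun hω => hω.2, fun hi => ⟨hM i ((hb i).2 hi.2), hi⟩⟩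
  classical
  simp only [blockDiff, Set.indicator_apply, hmem, Pi.smul_apply, smul_eq_mul]

lemma sum_blockDiff (hM : ∀ i < b, blockScale R k * M i ω ≤ ε ^ 2 / 128)
    (ha : ∀ i, i < a ↔ quadVar (X · ω) i < R ^ k)
    (hb : ∀ i, i < b ↔ quadVar (X · ω) i < R ^ (k + 1)) (hab : a ≤ b) (hbn : b ≤ n) :
    ∑ i ∈ Finset.range n, blockDiff X M ε R k i ω = (1 - 2 * ε) * blockScale R k *
      (∑ i ∈ Finset.range b, X i ω - ∑ i ∈ Finset.range a, X i ω) := by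
  simp only [blockDiff_eq_ite hM ha hb, sum_range_ite_eq_sub _ hab hbn, ← Finset.mul_sum, mul_sub]

lemma quadVar_blockDiff (hM : ∀ i < b, blockScale R k * M i ω ≤ ε ^ 2 / 128)
    (ha : ∀ i, i < a ↔ quadVar (X · ω) i < R ^ k)
    (hb : ∀ i, i < b ↔ quadVar (X · ω) i < R ^ (k + 1)) (hab : a ≤ b) (hbn : b ≤ n) :
    quadVar (blockDiff X M ε R k · ω) n = ((1 - 2 * ε) * blockScale R k) ^ 2 *
      (quadVar (X · ω) b - quadVar (X · ω) a) := by
  simp only [quadVar, blockDiff_eq_ite hM ha hb, ite_pow, zero_pow two_ne_zero,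
    sum_range_ite_eq_sub _ hab hbn, mul_pow, ← Finset.mul_sum, mul_sub]

end Block

variable {Ω : Type*} {mΩ : MeasurableSpace Ω} {μ : Measure Ω} {ℱ : Filtration ℕ mΩ}
  {X M : ℕ → Ω → ℝ}

lemma measurableSet_blockSet (hX : IsMartingaleDiff X ℱ μ)
    (hM : ∀ n, StronglyMeasurable[ℱ n] (M n)) (ε R : ℝ) (k n : ℕ) :
    MeasurableSet[ℱ n] (blockSet X M ε R k n) :=
  (measurableSet_le ((hM n).measurable.const_mul _) measurable_const).inter
    ((hX.stronglyMeasurable_quadVar n).measurable measurableSet_Ico)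

theorem ae_frequently_le_sum [IsFiniteMeasure μ] (hX : IsMartingaleDiff X ℱ μ)
    (hM : ∀ n, StronglyMeasurable[ℱ n] (M n))
    (hXM : ∀ᵐ ω ∂μ, KolmogorovCondition (X · ω) (M · ω)) {ε : ℝ} (hε₀ : 0 < ε) (hε₁ : ε ≤ 1 / 4) :
    ∀ᵐ ω ∂μ, ∃ᶠ n in atTop,
      √2 * (1 - 7 * ε) * lilNorm (quadVar (X · ω) n) ≤ ∑ i ∈ Finset.range n, X i ω := by
  set R := 1 / ε ^ 2
  have hR : R * ε ^ 2 = 1 := one_div_mul_cancel (by positivity)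
  have hR₀ : 0 < R := by positivity
  have hR₁ : 1 ≤ R := by nlinarith
  have hA := measurableSet_blockSet hX hM ε R
  have hblock := ae_frequently_frequently_lt_sum (Y := blockDiff X M ε R)
    (fun k => (hX.const_smul _).indicator (hA k)) hε₀ hε₁
    (fun k n => hXM.mono fun ω h => abs_blockDiff_le hε₀.le (by linarith) h R k n) hA
    (pairwise_disjoint_blockSet hR₁ X M ε) (fun k n ω hω => Set.indicator_of_notMem hω _)
    (fun k n => hXM.mono fun ω h => quadVar_blockDiff_le hε₀.le hε₁ hR₀ h k n)
  have hneg := ae_eventually_sum_le hX.neg hM (hXM.mono fun ω h => h.neg)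
    (show (0 : ℝ) < 1 / 10 by norm_num) (by norm_num)
  filter_upwards [hXM, hblock, hneg] with ω h hblock hneg
  refine h.frequently_le_sum hε₀ hε₁ hR ?_ (hblock.mono fun k hk a b hab hm ha hb hquad => ?_)
  · filter_upwards [hneg] with n hn
    have hsqrt : √2 * (1 + 1 / 10) ^ 2 ≤ 2 := by
      have := Real.sqrt_le_iff.2 (show (0 : ℝ) ≤ 3 / 2 ∧ 2 ≤ (3 / 2 : ℝ) ^ 2 by norm_num)
      linarith
    simp only [Pi.neg_apply, Finset.sum_neg_distrib, quadVar, neg_sq] at hn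
    exact hn.trans (mul_le_mul_of_nonneg_right hsqrt (lilNorm_nonneg _))
  · obtain ⟨n, hn, hbn⟩ := (hk.and_eventually (eventually_ge_atTop b)).exists
    rw [sum_blockDiff hm ha hb hab hbn, quadVar_blockDiff hm ha hb hab hbn] at hn
    exact hn hquad

end LowerBound

section Limsup

lemma limsup_div_eq_of_forall {s b : ℕ → ℝ} {c : ℝ} {u l : ℕ → ℝ} (hb : ∀ᶠ n in atTop, 0 < b n)
    (hu : Tendsto u atTop (nhds c)) (hl : Tendsto l atTop (nhds c))
    (hsu : ∀ j, ∀ᶠ n in atTop, s n ≤ u j * b n) (hls : ∀ j, ∃ᶠ n in atTop, l j * b n ≤ s n) :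
    limsup (fun n => ((s n / b n : ℝ) : EReal)) atTop = c := by
  apply le_antisymm
  · refine ge_of_tendsto' ((continuous_coe_real_ereal.tendsto c).comp hu) fun j => ?_
    refine limsup_le_of_le (h := ?_)
    filter_upwards [hb, hsu j] with n hbn hn
    exact EReal.coe_le_coe_iff.2 ((div_le_iff₀ hbn).2 hn)
  · refine le_of_tendsto' ((continuous_coe_real_ereal.tendsto c).comp hl) fun j => ?_
    refine le_limsup_of_frequently_le (((hls j).and_eventually hb).mono fun n hn => ?_)
    exact EReal.coe_le_coe_iff.2 ((le_div_iff₀ hn.2).2 hn.1)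

theorem ae_limsup_sum_div_lilNorm_eq {Ω : Type*} {mΩ : MeasurableSpace Ω} {μ : Measure Ω}
    [IsFiniteMeasure μ] {ℱ : Filtration ℕ mΩ} {X M : ℕ → Ω → ℝ} (hX : IsMartingaleDiff X ℱ μ)
    (hM : ∀ n, StronglyMeasurable[ℱ n] (M n))
    (hXM : ∀ᵐ ω ∂μ, KolmogorovCondition (X · ω) (M · ω)) :
    ∀ᵐ ω ∂μ, limsup (fun n =>
      (((∑ i ∈ Finset.range n, X i ω) / lilNorm (quadVar (X · ω) n) : ℝ) : EReal)) atTop =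
        ((√2 : ℝ) : EReal) := by
  have hpos (j : ℕ) : (0 : ℝ) < 1 / (j + 1) := by positivity
  have hle (j : ℕ) : 1 / ((j : ℝ) + 1) ≤ 1 :=
    (div_le_one₀ (by positivity)).2 (by linarith [j.cast_nonneg (α := ℝ)])
  have hlim {g : ℝ → ℝ} (hg : Continuous g) (h₀ : g 0 = √2) :
      Tendsto (fun j : ℕ => g (1 / ((j : ℝ) + 1))) atTop (nhds √2) :=
    (hg.tendsto' 0 _ h₀).comp tendsto_one_div_add_atTop_nhds_zero_nat
  have hupper (j : ℕ) := ae_eventually_sum_le hX hM hXM (hpos j) (hle j)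
  have hlower (j : ℕ) := ae_frequently_le_sum hX hM hXM (ε := 1 / 4 * (1 / ((j : ℝ) + 1)))
    (by positivity) (by linarith [hle j])
  filter_upwards [hXM, ae_all_iff.2 hupper, ae_all_iff.2 hlower] with ω h hupper hlower
  exact limsup_div_eq_of_forall h.eventually_lilNorm_pos
    (hlim (g := fun t => √2 * (1 + t) ^ 2) (by fun_prop) (by simp))
    (hlim (g := fun t => √2 * (1 - 7 * (1 / 4 * t))) (by fun_prop) (by simp)) hupper hlower

end Limsup

end MartingaleLIL

/-- Theorem 6.1 (self-normalized LIL for martingales). -/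
theorem stmt_19 {Ω : Type*} {mΩ : MeasurableSpace Ω} {μ : Measure Ω}
    [IsProbabilityMeasure μ] (ℱ : Filtration ℕ mΩ)
    (X M : ℕ → Ω → ℝ)
    (hX : ∀ n, StronglyMeasurable[ℱ (n + 1)] (X (n + 1)))
    (hint : ∀ n, Integrable (X (n + 1)) μ)
    (hcond : ∀ n, μ[X (n + 1) | ℱ n] =ᵐ[μ] 0)
    (hMmeas : ∀ n, StronglyMeasurable[ℱ n] (M (n + 1)))
    (hbd : ∀ n, ∀ᵐ ω ∂μ, |X (n + 1) ω| ≤ M (n + 1) ω)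
    (hV : ∀ᵐ ω ∂μ,
      Tendsto (fun n => Real.sqrt (∑ i ∈ Finset.range n, (X (i + 1) ω) ^ 2)) atTop atTop)
    (hMo : ∀ᵐ ω ∂μ,
      Tendsto (fun n => M (n + 1) ω /
          (Real.sqrt (∑ i ∈ Finset.range (n + 1), (X (i + 1) ω) ^ 2) /
            Real.sqrt (Real.log (Real.log
              (Real.sqrt (∑ i ∈ Finset.range (n + 1), (X (i + 1) ω) ^ 2))))))
        atTop (nhds 0)) :
    ∀ᵐ ω ∂μ,
      Filter.limsup (fun n =>
          (((∑ i ∈ Finset.range n, X (i + 1) ω) /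
            (Real.sqrt (∑ i ∈ Finset.range n, (X (i + 1) ω) ^ 2) *
              Real.sqrt (Real.log (Real.log
                (Real.sqrt (∑ i ∈ Finset.range n, (X (i + 1) ω) ^ 2)))))) : EReal))
        atTop = ((Real.sqrt 2 : ℝ) : EReal) := by
  have hdiff : MartingaleLIL.IsMartingaleDiff (fun n => X (n + 1)) ℱ μ := ⟨hX, hint, hcond⟩
  have hXM : ∀ᵐ ω ∂μ,
      MartingaleLIL.KolmogorovCondition (fun n => X (n + 1) ω) (fun n => M (n + 1) ω) := by
    filter_upwards [ae_all_iff.2 hbd, hV, hMo] with ω hbd hV hMo using ⟨hbd, hV, hMo⟩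
  filter_upwards [MartingaleLIL.ae_limsup_sum_div_lilNorm_eq hdiff hMmeas hXM] with ω hω
  simpa only [MartingaleLIL.lilNorm, MartingaleLIL.ell, MartingaleLIL.quadVar, EReal.coe_div,
    EReal.coe_mul] using hω
end
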